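/- Let R be any commutative unital ring, ξ ∈ R^×, and Q_1, …, Q_r ∈ R. For each conjugacy class C of W_n choose any element w_C ∈ C_min and fix a reduced expression x_1⋯x_k of w_C, defining T_{w_C} := T_{x_1}⋯T_{x_k} ∈ H_{n,R}. Then the cocenter Tr(H_{n,R}) is spanned as an R-module by the images of the elements T_{w_C}, where C ranges over the conjugacy classes of W_n. -/

import Mathlib

/-!
Words in the generators are evaluated simultaneously in the Hecke algebra, in `W_n` and in `ℕ` (by
their length); the evaluations form a monoid `WM`. On it consider the equivalence relation `E` (same
length, conjugate in `W_n`, congruent in the cocenter modulo shorter words) and the predicate `D`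
of reducible words (the conjugacy class contains a shorter element, and the word vanishes in the
cocenter modulo shorter words). Everything about words is deduced from a few properties of `E` and
`D`, collected in the structure `Ctx`: invariance under braid relations and cyclic shifts, under
conjugation by invertible elements, and under exchanging `t` with `s_1 t^a s_1`, while words
containing `s_i s_i` or `t^r` are reducible.

By braid relations and cyclic shifts, every word is reducible or equivalent to a product of blocks
(`Ctx.exists_blocks`); a block of size `p` and colour `a` is a lift of a `p`-cycle on consecutive
positions with colour `a`. Two adjacent blocks in the wrong order are exchanged, or the word is seen
to be reducible (`Ctx.swap_blocks`): uncoloured blocks are exchanged by conjugation with a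
power of `s_{k+1} ⋯ s_{k+m}`; an uncoloured block before a coloured one, or a longer coloured block
before a shorter coloured one, makes the word reducible; coloured blocks of equal size are
exchanged through a word symmetric in both up to a cyclic shift. Hence every word is reducible or
equivalent to a sorted product of blocks (`Ctx.exists_sorted`).

The sorted list of blocks is determined by the conjugacy class in `W_n` (`perm_of_isConj`): in the
action on positions with colours in `ZMod r`, the number of points with given period and given
change of colour is a class function, and it counts the blocks of each type. A word of minimal
length in its class is not reducible, so every irreducible word is congruent to the chosen
`T_{w_C}` modulo commutators and shorter words. Induction on the length (`Tw_mem`) shows that the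
elements `T_{w_C}` and the commutators span all words, and words span the algebra (`span_Tw`).
-/

/-! ## The complex reflection group `W_n` of type `G(r,1,n)`.

Generators are indexed by natural numbers: index `0` is `t` and index `i`
(for `1 ≤ i ≤ n-1`) is `s_i`; generators with index `≥ n` are killed by a relator,
so this is a presentation of the complex reflection group of type `G(r,1,n)`. -/

noncomputable section

namespace CRG

/-- The relators of the presentation of `G(r,1,n)`. -/
def rels (r n : ℕ) : Set (FreeGroup ℕ) :=
  {w | (w = FreeGroup.of 0 ^ r)
    ∨ (∃ i, 1 ≤ i ∧ i < n ∧ w = FreeGroup.of i ^ 2)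
    ∨ (2 ≤ n ∧ w = FreeGroup.of 0 * FreeGroup.of 1 * FreeGroup.of 0 * FreeGroup.of 1 *
        (FreeGroup.of 1 * FreeGroup.of 0 * FreeGroup.of 1 * FreeGroup.of 0)⁻¹)
    ∨ (∃ i, 2 ≤ i ∧ i < n ∧ w = FreeGroup.of 0 * FreeGroup.of i *
        (FreeGroup.of i * FreeGroup.of 0)⁻¹)
    ∨ (∃ i, 1 ≤ i ∧ i + 1 < n ∧ w = FreeGroup.of i * FreeGroup.of (i + 1) * FreeGroup.of i *
        (FreeGroup.of (i + 1) * FreeGroup.of i * FreeGroup.of (i + 1))⁻¹)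
    ∨ (∃ i j, 1 ≤ i ∧ i + 1 < j ∧ j < n ∧ w = FreeGroup.of i * FreeGroup.of j *
        (FreeGroup.of j * FreeGroup.of i)⁻¹)
    ∨ (∃ i, n ≤ i ∧ w = FreeGroup.of i)}

/-- The complex reflection group of type `G(r,1,n)`. -/
abbrev W (r n : ℕ) : Type := PresentedGroup (rels r n)

/-- The generator with index `m` : `t` for `m = 0`, `s_m` for `1 ≤ m ≤ n-1`. -/
def gen (r n : ℕ) (m : ℕ) : W r n := PresentedGroup.of m

/-- The product in `W r n` of a word, given as a list of generator indices. -/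
def wprod (r n : ℕ) (l : List ℕ) : W r n := (l.map (gen r n)).prod

/-- The set of standard generators `S = {t, s_1, …, s_{n-1}}`. -/
def S (r n : ℕ) : Set (W r n) := {x | ∃ m, m < n ∧ x = gen r n m}

/-- The length of `w` : the minimal length of a word in `t, s_1, …, s_{n-1}`
expressing `w`. -/
def ell (r n : ℕ) (w : W r n) : ℕ :=
  sInf {k | ∃ l : List ℕ, (∀ m ∈ l, m < n) ∧ l.length = k ∧ wprod r n l = w}

/-- `l` is a reduced expression of `w`. -/
def IsReducedWord (r n : ℕ) (l : List ℕ) (w : W r n) : Prop :=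
  (∀ m ∈ l, m < n) ∧ wprod r n l = w ∧ l.length = ell r n w

/-- `w →ˢ w'` : `w' = s w s⁻¹` for `s ∈ S`, with `ℓ(w') ≤ ℓ(w)` and either
`ℓ(sw) < ℓ(w)` or `ℓ(w s⁻¹) < ℓ(w)`. -/
def Step (r n : ℕ) (s w w' : W r n) : Prop :=
  s ∈ S r n ∧ w' = s * w * s⁻¹ ∧ ell r n w' ≤ ell r n w ∧
    (ell r n (s * w) < ell r n w ∨ ell r n (w * s⁻¹) < ell r n w)

/-- `w → w'` : a finite (possibly empty) chain of steps `→ˢ` with `s ∈ S`. -/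
def Arrow (r n : ℕ) : W r n → W r n → Prop :=
  Relation.ReflTransGen (fun w w' => ∃ s, Step r n s w w')

end CRG
/-! ## The cyclotomic Hecke algebra of type `G(r,1,n)`. -/

namespace CHA

open CRG

/-- The defining relations of the cyclotomic Hecke algebra `H_{n,R}(ξ; Q_1, …, Q_r)`,
as a relation on the free algebra on generators `T_0, …, T_{n-1}`. -/
def rel (R : Type) [CommRing R] (r n : ℕ) (ξ : R) (Q : Fin r → R) :
    FreeAlgebra R (Fin n) → FreeAlgebra R (Fin n) → Prop := fun a b =>
  -- cyclotomic relation `(T_0 - Q_1) ⋯ (T_0 - Q_r) = 0`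
  (∃ h0 : 0 < n,
    a = (List.ofFn (fun i : Fin r =>
          FreeAlgebra.ι R (⟨0, h0⟩ : Fin n) -
            algebraMap R (FreeAlgebra R (Fin n)) (Q i))).prod ∧
    b = 0)
  -- `T_0 T_1 T_0 T_1 = T_1 T_0 T_1 T_0`
  ∨ (∃ (h0 : 0 < n) (h1 : 1 < n),
      a = FreeAlgebra.ι R (⟨0, h0⟩ : Fin n) * FreeAlgebra.ι R (⟨1, h1⟩ : Fin n) *
          FreeAlgebra.ι R (⟨0, h0⟩ : Fin n) * FreeAlgebra.ι R (⟨1, h1⟩ : Fin n) ∧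
      b = FreeAlgebra.ι R (⟨1, h1⟩ : Fin n) * FreeAlgebra.ι R (⟨0, h0⟩ : Fin n) *
          FreeAlgebra.ι R (⟨1, h1⟩ : Fin n) * FreeAlgebra.ι R (⟨0, h0⟩ : Fin n))
  -- quadratic relations `(T_i - ξ)(T_i + 1) = 0`, `1 ≤ i ≤ n-1`
  ∨ (∃ (i : ℕ) (hi : i < n), 1 ≤ i ∧
      a = (FreeAlgebra.ι R (⟨i, hi⟩ : Fin n) - algebraMap R (FreeAlgebra R (Fin n)) ξ) *
          (FreeAlgebra.ι R (⟨i, hi⟩ : Fin n) + 1) ∧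
      b = 0)
  -- commuting relations `T_i T_j = T_j T_i`, `0 ≤ i < j-1 < n-1`
  ∨ (∃ (i j : ℕ) (hi : i < n) (hj : j < n), i + 1 < j ∧
      a = FreeAlgebra.ι R (⟨i, hi⟩ : Fin n) * FreeAlgebra.ι R (⟨j, hj⟩ : Fin n) ∧
      b = FreeAlgebra.ι R (⟨j, hj⟩ : Fin n) * FreeAlgebra.ι R (⟨i, hi⟩ : Fin n))
  -- braid relations `T_i T_{i+1} T_i = T_{i+1} T_i T_{i+1}`, `1 ≤ i < n-1`
  ∨ (∃ (i : ℕ) (hi : i + 1 < n), 1 ≤ i ∧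
      a = FreeAlgebra.ι R (⟨i, Nat.lt_of_succ_lt hi⟩ : Fin n) *
          FreeAlgebra.ι R (⟨i + 1, hi⟩ : Fin n) *
          FreeAlgebra.ι R (⟨i, Nat.lt_of_succ_lt hi⟩ : Fin n) ∧
      b = FreeAlgebra.ι R (⟨i + 1, hi⟩ : Fin n) *
          FreeAlgebra.ι R (⟨i, Nat.lt_of_succ_lt hi⟩ : Fin n) *
          FreeAlgebra.ι R (⟨i + 1, hi⟩ : Fin n))

/-- The cyclotomic Hecke algebra `H_{n,R}(ξ; Q_1, …, Q_r)` of type `G(r,1,n)`. -/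
abbrev Alg (R : Type) [CommRing R] (r n : ℕ) (ξ : R) (Q : Fin r → R) : Type :=
  RingQuot (rel R r n ξ Q)

/-- The generator `T_i` of the cyclotomic Hecke algebra. -/
def T (R : Type) [CommRing R] (r n : ℕ) (ξ : R) (Q : Fin r → R) (i : Fin n) :
    Alg R r n ξ Q :=
  RingQuot.mkAlgHom R (rel R r n ξ Q) (FreeAlgebra.ι R i)

/-- The generator `T_m`, indexed by a natural number (`1` for out-of-range indices). -/
def Tn (R : Type) [CommRing R] (r n : ℕ) (ξ : R) (Q : Fin r → R) (m : ℕ) :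
    Alg R r n ξ Q :=
  if h : m < n then T R r n ξ Q ⟨m, h⟩ else 1

/-- The product `T_{x_1} ⋯ T_{x_k}` attached to a word `x_1 ⋯ x_k` in the generators
of `W_n` (`0 ↦ T_0`, `i ↦ T_i`). -/
def Tw (R : Type) [CommRing R] (r n : ℕ) (ξ : R) (Q : Fin r → R) (l : List ℕ) :
    Alg R r n ξ Q :=
  (l.map (Tn R r n ξ Q)).prod

/-- The `R`-submodule `[A,A]` of an `R`-algebra `A` spanned by all commutators `ab - ba`.
The quotient `A ⧸ [A,A]` is the cocenter `Tr(A)`. -/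
def commutatorSubmodule (R A : Type) [CommRing R] [Ring A] [Algebra R A] : Submodule R A :=
  Submodule.span R {x | ∃ a b : A, x = a * b - b * a}

/-- An `r`-partition of `n` : an `r`-tuple of partitions (multisets of positive integers)
whose sizes sum to `n`. -/
def RPartition (r n : ℕ) : Type :=
  { p : Fin r → Multiset ℕ // (∀ i, ∀ x ∈ p i, 0 < x) ∧ (∑ i, (p i).sum) = n }

/-- The Jucys–Murphy elements: `jm k = L_{k+1} = ξ^{-k} T_k ⋯ T_1 T_0 T_1 ⋯ T_k`
(`jm` is 0-indexed, so `jm 0 = L_1 = T_0`). -/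
def jm (R : Type) [CommRing R] (r n : ℕ) (ξ : R) (Q : Fin r → R) (k : ℕ) :
    Alg R r n ξ Q :=
  Ring.inverse ξ ^ k •
    (((List.range k).map (fun j => Tn R r n ξ Q (k - j))).prod *
      Tn R r n ξ Q 0 *
      ((List.range k).map (fun j => Tn R r n ξ Q (j + 1))).prod)

end CHA

/-! ### Words in the generators and the abstract setting -/

namespace CocenterSpan

section Words

variable {M : Type*} [Monoid M]

/-- The ascending product `g a * g (a+1) * ⋯ * g (a+m-1)` of `m` consecutive generators. -/
def asc (g : ℕ → M) (a : ℕ) : ℕ → M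
  | 0 => 1
  | m + 1 => asc g a m * g (a + m)

/-- The descending product `g (a+m-1) * ⋯ * g (a+1) * g a` of `m` consecutive generators. -/
def des (g : ℕ → M) (a : ℕ) : ℕ → M
  | 0 => 1
  | m + 1 => g (a + m) * des g a m

/-- The palindrome `g (a+m) ⋯ g (a+1) g a g (a+1) ⋯ g (a+m)`, a lift of the transposition
exchanging `a` and `a+m+1`. -/
def pal (g : ℕ → M) (a : ℕ) : ℕ → M
  | 0 => g a
  | m + 1 => g (a + m + 1) * pal g a m * g (a + m + 1)

/-- The word `s_k ⋯ s_1 t^a s_1 ⋯ s_k`, a lift of the diagonal element with entry `ζ^a` in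
position `k+1`. -/
def br (g : ℕ → M) (a : ℕ) : ℕ → M
  | 0 => g 0 ^ a
  | k + 1 => g (k + 1) * br g a k * g (k + 1)

/-- The block of size `p` and colour `a` occupying the positions `k+1, …, k+p`: the cycle
`s_{k+1} ⋯ s_{k+p-1}`, preceded by `s_k ⋯ s_1 t^a s_1 ⋯ s_k` if `a ≠ 0`. -/
def blk (g : ℕ → M) (k p a : ℕ) : M :=
  (if a = 0 then 1 else br g a k) * asc g (k + 1) (p - 1)

/-- The product of consecutive blocks with sizes and colours `(p, a)` read off from a list, the
first of them starting after position `k`. -/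
def bw (g : ℕ → M) : ℕ → List (ℕ × ℕ) → M
  | _, [] => 1
  | k, x :: L => blk g k x.1 x.2 * bw g (k + x.1) L

/-- The total size of a list of blocks. -/
def tot (L : List (ℕ × ℕ)) : ℕ := (L.map Prod.fst).sum

lemma asc_succ' (g : ℕ → M) (a m : ℕ) : asc g a (m + 1) = g a * asc g (a + 1) m := by
  induction m generalizing a with
  | zero => simp [asc]
  | succ m ih => rw [asc, ih, asc, mul_assoc]; congr 3; omega

lemma des_succ' (g : ℕ → M) (a m : ℕ) : des g a (m + 1) = des g (a + 1) m * g a := by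
  induction m generalizing a with
  | zero => simp [des]
  | succ m ih => rw [des, ih, des, mul_assoc]; congr 2; omega

lemma asc_add (g : ℕ → M) (a m l : ℕ) : asc g a (m + l) = asc g a m * asc g (a + m) l := by
  induction l with
  | zero => simp [asc]
  | succ l ih => rw [← add_assoc, asc, ih, asc, mul_assoc]; congr 3; omega

lemma pal_eq (g : ℕ → M) (a m : ℕ) :
    pal g a m = des g (a + 1) m * g a * asc g (a + 1) m := by
  induction m with
  | zero => simp [pal, des, asc]
  | succ m ih =>
    rw [pal, ih, des, asc, show a + m + 1 = a + 1 + m by omega]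
    simp only [mul_assoc]

lemma br_add (g : ℕ → M) (k p a : ℕ) :
    br g a (k + p) = des g (k + 1) p * br g a k * asc g (k + 1) p := by
  induction p with
  | zero => simp [des, asc]
  | succ p ih =>
    rw [← add_assoc, br, ih, des, asc, show k + p + 1 = k + 1 + p by omega]
    simp only [mul_assoc]

lemma tot_cons (x : ℕ × ℕ) (L : List (ℕ × ℕ)) : tot (x :: L) = x.1 + tot L := by
  simp [tot]

lemma tot_append (L L' : List (ℕ × ℕ)) : tot (L ++ L') = tot L + tot L' := by
  simp [tot]

lemma bw_append (g : ℕ → M) (k : ℕ) (L L' : List (ℕ × ℕ)) :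
    bw g k (L ++ L') = bw g k L * bw g (k + tot L) L' := by
  induction L generalizing k with
  | nil => simp [bw, tot]
  | cons x L ih => rw [List.cons_append, bw, ih, bw, tot_cons, mul_assoc, add_assoc]

/-- The outermost letter of a palindrome can be split off on the left. -/
lemma pal_left (g : ℕ → M) (a m : ℕ) : ∃ y, pal g a m = g (a + m) * y := by
  cases m with
  | zero => exact ⟨1, by simp [pal]⟩
  | succ m => exact ⟨pal g a m * g (a + m + 1), by rw [pal, mul_assoc]; rfl⟩

lemma semiconj_asc {g : ℕ → M} {z : M} {u v l : ℕ}
    (h : ∀ i < l, SemiconjBy z (g (u + i)) (g (v + i))) :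
    SemiconjBy z (asc g u l) (asc g v l) := by
  induction l with
  | zero => exact SemiconjBy.one_right z
  | succ l ih => exact (ih fun i hi => h i (by omega)).mul_right (h l (by omega))

lemma semiconj_pal {g : ℕ → M} {z : M} {u v l : ℕ}
    (h : ∀ i ≤ l, SemiconjBy z (g (u + i)) (g (v + i))) :
    SemiconjBy z (pal g u l) (pal g v l) := by
  induction l with
  | zero => exact h 0 le_rfl
  | succ l ih =>
    have h' := h (l + 1) le_rfl
    exact (h'.mul_right (ih fun i hi => h i (by omega))).mul_right h'

lemma commute_asc {g : ℕ → M} {z : M} {u l : ℕ}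
    (h : ∀ i, u ≤ i → i < u + l → Commute z (g i)) : Commute z (asc g u l) :=
  semiconj_asc fun i hi => h (u + i) (by omega) (by omega)

lemma commute_des {g : ℕ → M} {z : M} {u l : ℕ}
    (h : ∀ i, u ≤ i → i < u + l → Commute z (g i)) : Commute z (des g u l) := by
  induction l with
  | zero => exact Commute.one_right z
  | succ l ih =>
    exact (h (u + l) (by omega) (by omega)).mul_right
      (ih fun i hi hi' => h i hi (by omega))

lemma commute_pal {g : ℕ → M} {z : M} {u l : ℕ}
    (h : ∀ i, u ≤ i → i ≤ u + l → Commute z (g i)) : Commute z (pal g u l) :=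
  semiconj_pal fun i hi => h (u + i) (by omega) (by omega)

end Words

/-- A monoid with generators `g 0 = t`, `g i = s_i` subject to the braid relations of
`G(r,1,n)`, with an equivalence relation `E` and a predicate `D`. In the application the
elements are words in the generators, `E x y` means that `x` and `y` have the same length and
conjugate images in `W_n` and that `T_x ≡ T_y` in the cocenter up to shorter words, while `D x`
means that the class of `x` contains a shorter element and that `T_x` vanishes in the cocenter
up to shorter words. -/
structure Ctx (M : Type*) [Monoid M] (r n : ℕ) where
  /-- the generators -/
  g : ℕ → M
  /-- equivalence in the cocenter up to shorter words -/
  E : M → M → Prop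
  /-- reducibility to shorter words in the cocenter -/
  D : M → Prop
  comm : ∀ i j, i + 2 ≤ j → Commute (g i) (g j)
  braid : ∀ i, 1 ≤ i → i + 1 < n → g i * g (i + 1) * g i = g (i + 1) * g i * g (i + 1)
  refl : ∀ x, E x x
  symm : ∀ {x y}, E x y → E y x
  trans : ∀ {x y z}, E x y → E y z → E x z
  cyc : ∀ x y, E (x * y) (y * x)
  conj : ∀ z x y, z ∈ Submonoid.closure {x | ∃ i, 1 ≤ i ∧ i < n ∧ x = g i} →
    z * x = y * z → E x y
  tcomm : 1 < n → ∀ a u v, E (u * (g 0 * (g 1 * g 0 ^ a * g 1)) * v)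
    (u * (g 1 * g 0 ^ a * g 1 * g 0) * v)
  D_of_E : ∀ {x y}, E x y → D y → D x
  D_sq : ∀ i, 1 ≤ i → i < n → ∀ u v, D (u * (g i * g i) * v)
  D_t : ∀ u v, D (u * g 0 ^ r * v)

namespace Ctx

variable {M : Type*} [Monoid M] {r n : ℕ} (c : Ctx M r n)

/-- The contextual closure of `E`: the largest congruence contained in it. -/
def A (x y : M) : Prop := ∀ u v, c.E (u * x * v) (u * y * v)

/-- The contextual version of `D`: reducibility inside every larger word. -/
def D0 (x : M) : Prop := ∀ u v, c.D (u * x * v)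

/-- The submonoid of words in the generators with index `< k`. -/
def P (k : ℕ) : Submonoid M := Submonoid.closure {x | ∃ i, i < k ∧ x = c.g i}

variable {c}

lemma A.refl (x : M) : c.A x x := fun _ _ => c.refl _

lemma A.of_eq {x y : M} (h : x = y) : c.A x y := h ▸ A.refl x

lemma A.symm {x y : M} (h : c.A x y) : c.A y x := fun u v => c.symm (h u v)

lemma A.trans {x y z : M} (h : c.A x y) (h' : c.A y z) : c.A x z :=
  fun u v => c.trans (h u v) (h' u v)

lemma A.mul {x y x' y' : M} (h : c.A x y) (h' : c.A x' y') : c.A (x * x') (y * y') := by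
  intro u v
  have h1 := h u (x' * v)
  have h2 := h' (u * y) v
  simp only [mul_assoc] at h1 h2 ⊢
  exact c.trans h1 h2

lemma A.mul_left {x y : M} (z : M) (h : c.A x y) : c.A (z * x) (z * y) := (A.refl z).mul h

lemma A.mul_right {x y : M} (h : c.A x y) (z : M) : c.A (x * z) (y * z) := h.mul (A.refl z)

lemma A.toE {x y : M} (h : c.A x y) : c.E x y := by simpa using h 1 1

lemma D0.of_A {x y : M} (h : c.A x y) (h' : c.D0 y) : c.D0 x :=
  fun u v => c.D_of_E (h u v) (h' u v)

lemma D0.mul {x : M} (h : c.D0 x) (u v : M) : c.D0 (u * x * v) := by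
  intro u' v'
  have := h (u' * u) (v * v')
  simpa only [mul_assoc] using this

lemma D0.mul_left {x : M} (h : c.D0 x) (u : M) : c.D0 (u * x) := by simpa using h.mul u 1

lemma D0.mul_right {x : M} (h : c.D0 x) (u : M) : c.D0 (x * u) := by simpa using h.mul 1 u

lemma D0.toD {x : M} (h : c.D0 x) : c.D x := by simpa using h 1 1

lemma D0_sq {i : ℕ} (h1 : 1 ≤ i) (h2 : i < n) : c.D0 (c.g i * c.g i) := c.D_sq i h1 h2

lemma D0_t : c.D0 (c.g 0 ^ r) := c.D_t

lemma g_mem {i k : ℕ} (h : i < k) : c.g i ∈ c.P k := Submonoid.subset_closure ⟨i, h, rfl⟩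

lemma P_mono {k l : ℕ} (h : k ≤ l) : c.P k ≤ c.P l := by
  refine Submonoid.closure_mono ?_
  rintro x ⟨i, hi, rfl⟩
  exact ⟨i, by omega, rfl⟩

lemma asc_mem {a m k : ℕ} (h : a + m ≤ k) : asc c.g a m ∈ c.P k := by
  induction m with
  | zero => exact one_mem _
  | succ m ih => exact mul_mem (ih (by omega)) (g_mem (by omega))

lemma br_mem {a m k : ℕ} (h : m < k) : br c.g a m ∈ c.P k := by
  induction m with
  | zero => exact pow_mem (g_mem h) _
  | succ m ih => exact mul_mem (mul_mem (g_mem h) (ih (by omega))) (g_mem h)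

lemma blk_mem {k p a l : ℕ} (hp : 1 ≤ p) (h : k + p ≤ l) : blk c.g k p a ∈ c.P l := by
  unfold blk
  refine mul_mem ?_ (asc_mem (by omega))
  split_ifs
  · exact one_mem _
  · exact br_mem (by omega)

lemma bw_mem {L : List (ℕ × ℕ)} {k l : ℕ} (hL : ∀ x ∈ L, 1 ≤ x.1) (h : k + tot L ≤ l) :
    bw c.g k L ∈ c.P l := by
  induction L generalizing k with
  | nil => exact one_mem _
  | cons x L ih =>
    rw [tot_cons] at h
    exact mul_mem (blk_mem (hL x (by simp)) (by omega))
      (ih (fun y hy => hL y (by simp [hy])) (by omega))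

lemma comm' {i j : ℕ} (h : i + 2 ≤ j ∨ j + 2 ≤ i) : Commute (c.g i) (c.g j) :=
  h.elim (c.comm i j) fun h => (c.comm j i h).symm

/-- Words in small letters commute with everything that commutes with these letters. -/
lemma commute_of_mem {x z : M} {k : ℕ} (hx : x ∈ c.P k)
    (h : ∀ i < k, Commute (c.g i) z) : Commute x z := by
  induction hx using Submonoid.closure_induction with
  | mem x hx => obtain ⟨i, hi, rfl⟩ := hx; exact h i hi
  | one => exact Commute.one_left z
  | mul x y _ _ hx hy => exact hx.mul_left hy

lemma A_commute_of_mem {x z : M} {k : ℕ} (hx : x ∈ c.P k)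
    (h : ∀ i < k, c.A (c.g i * z) (z * c.g i)) : c.A (x * z) (z * x) := by
  induction hx using Submonoid.closure_induction with
  | mem x hx => obtain ⟨i, hi, rfl⟩ := hx; exact h i hi
  | one => exact A.of_eq (by simp)
  | mul x y _ _ hx hy =>
    have h1 := hy.mul_left x
    have h2 := hx.mul_right y
    simp only [mul_assoc] at h1 h2 ⊢
    exact h1.trans h2

/-- Conjugation by an ascending product shifts the inner letters up by one. -/
lemma shift {a m i : ℕ} (ha : 1 ≤ a) (hm : a + m ≤ n) (h1 : a ≤ i) (h2 : i + 1 < a + m) :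
    SemiconjBy (asc c.g a m) (c.g i) (c.g (i + 1)) := by
  induction m with
  | zero => omega
  | succ m ih =>
    rcases Nat.lt_or_ge (i + 1) (a + m) with h | h
    · refine SemiconjBy.mul_left (ih (by omega) h) ?_
      exact comm' (Or.inr (by omega))
    · obtain ⟨m', rfl⟩ : ∃ m', m = m' + 1 := ⟨m - 1, by omega⟩
      obtain rfl : i = a + m' := by omega
      have hb := c.braid (a + m') (by omega) (by omega)
      have hc : Commute (c.g (a + m' + 1)) (asc c.g a m') :=
        commute_asc fun i h h' => comm' (Or.inr (by omega))
      unfold SemiconjBy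
      rw [asc, asc, ← add_assoc]
      calc _ = asc c.g a m' * (c.g (a + m') * c.g (a + m' + 1) * c.g (a + m')) := by
            simp only [mul_assoc]
        _ = (asc c.g a m' * c.g (a + m' + 1)) * (c.g (a + m') * c.g (a + m' + 1)) := by
            rw [hb]; simp only [mul_assoc]
        _ = _ := by rw [← hc.eq]; simp only [mul_assoc]

lemma shift_pow {a m i j : ℕ} (ha : 1 ≤ a) (hm : a + m ≤ n) (h1 : a ≤ i) (h2 : i + j < a + m) :
    SemiconjBy (asc c.g a m ^ j) (c.g i) (c.g (i + j)) := by
  induction j with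
  | zero => simp
  | succ j ih =>
    rw [pow_succ']
    exact SemiconjBy.mul_left (shift (i := i + j) ha hm (by omega) (by omega)) (ih (by omega))

/-- The square of an ascending product carries its last letter to its first one. -/
lemma shift_sq {a m : ℕ} (ha : 1 ≤ a) (hm : a + (m + 1) ≤ n) :
    SemiconjBy (asc c.g a (m + 1) ^ 2) (c.g (a + m)) (c.g a) := by
  have h1 : SemiconjBy (asc c.g a (m + 1)) (asc c.g a m) (asc c.g (a + 1) m) :=
    semiconj_asc fun i hi => by
      have := shift (c := c) (i := a + i) ha hm (by omega) (by omega)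
      rwa [show a + 1 + i = a + i + 1 by omega]
  have h2 : asc c.g a (m + 1) ^ 2
      = asc c.g (a + 1) m * asc c.g a (m + 1) * c.g (a + m) := by
    rw [← h1.eq, mul_assoc, sq]; rfl
  have h3 := asc_succ' c.g a m
  unfold SemiconjBy
  conv_rhs => rw [h2, ← mul_assoc, ← mul_assoc, ← h3, ← sq]

/-- The other description of a palindrome, with the small letters outside. -/
lemma pal_succ' {a m : ℕ} (ha : 1 ≤ a) (hm : a + m + 1 < n) :
    pal c.g a (m + 1) = c.g a * pal c.g (a + 1) m * c.g a := by
  induction m with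
  | zero => exact (c.braid a ha (by omega)).symm
  | succ m ih =>
    have hc : Commute (c.g (a + 1 + m + 1)) (c.g a) := comm' (Or.inr (by omega))
    rw [pal, ih (by omega), pal, show a + (m + 1) + 1 = a + 1 + m + 1 by omega]
    calc _ = (c.g (a + 1 + m + 1) * c.g a) * pal c.g (a + 1) m *
          (c.g a * c.g (a + 1 + m + 1)) := by simp only [mul_assoc]
      _ = _ := by rw [hc.eq]; simp only [mul_assoc]; rw [hc.eq]

lemma asc_mul_des {a m : ℕ} (ha : 1 ≤ a) (hm : a + m < n) :
    asc c.g a m * des c.g a (m + 1) = pal c.g a m := by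
  induction m generalizing a with
  | zero => simp [asc, des, pal]
  | succ m ih =>
    rw [asc_succ', des_succ', pal_succ' ha (by omega), ← ih (by omega) (by omega)]
    simp only [mul_assoc]

/-- `s_k ⋯ s_1 t^a s_1 ⋯ s_k` commutes with `s_i` for `1 ≤ i < k`. -/
lemma br_comm_low {a k i : ℕ} (h1 : 1 ≤ i) (h2 : i < k) (hk : k < n) :
    Commute (c.g i) (br c.g a k) := by
  induction k with
  | zero => omega
  | succ k ih =>
    rcases Nat.lt_or_ge i k with h | h
    · have hc : Commute (c.g i) (c.g (k + 1)) := comm' (Or.inl (by omega))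
      exact (hc.mul_right (ih h (by omega))).mul_right hc
    · obtain ⟨j, rfl⟩ : ∃ j, k = j + 1 := ⟨k - 1, by omega⟩
      obtain rfl : i = j + 1 := by omega
      have hb := c.braid (j + 1) (by omega) (by omega)
      have hc : Commute (c.g (j + 1 + 1)) (br c.g a j) := by
        clear ih
        have : ∀ j' ≤ j, Commute (c.g (j + 1 + 1)) (br c.g a j') := by
          intro j' hj'
          induction j' with
          | zero => exact Commute.pow_right (comm' (Or.inr (by omega))) _
          | succ j' ih =>
            have hc : Commute (c.g (j + 1 + 1)) (c.g (j' + 1)) := comm' (Or.inr (by omega))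
            exact (hc.mul_right (ih (by omega))).mul_right hc
        exact this j le_rfl
      unfold Commute SemiconjBy
      simp only [br]
      set x := c.g (j + 1)
      set y := c.g (j + 1 + 1)
      set z := br c.g a j
      calc _ = (x * y * x) * z * x * y := by simp only [mul_assoc]
        _ = y * x * (y * z) * x * y := by rw [hb]; simp only [mul_assoc]
        _ = y * x * z * (y * x * y) := by rw [hc.eq]; simp only [mul_assoc]
        _ = _ := by rw [← hb]; simp only [mul_assoc]

lemma br_comm_high {a k i : ℕ} (h2 : k + 2 ≤ i) : Commute (c.g i) (br c.g a k) := by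
  induction k with
  | zero => exact Commute.pow_right (comm' (Or.inr (by omega))) _
  | succ k ih =>
    have hc : Commute (c.g i) (c.g (k + 1)) := comm' (Or.inr (by omega))
    exact (hc.mul_right (ih (by omega))).mul_right hc

/-- Up to shorter words, `s_k ⋯ s_1 t^a s_1 ⋯ s_k` commutes with `t`. -/
lemma br_comm_zero {a k : ℕ} (hk : k < n) :
    c.A (c.g 0 * br c.g a k) (br c.g a k * c.g 0) := by
  match k with
  | 0 => exact A.of_eq ((Commute.refl _).pow_right a).eq
  | 1 => exact c.tcomm hk a
  | k + 2 =>
    have ih := br_comm_zero (a := a) (k := k + 1) (by omega)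
    have hc : Commute (c.g 0) (c.g (k + 2)) := comm' (Or.inl (by omega))
    have h := (ih.mul_left (c.g (k + 2))).mul_right (c.g (k + 2))
    rw [br]
    refine (A.of_eq ?_).trans (h.trans (A.of_eq ?_))
    · simp only [← mul_assoc]; rw [hc.eq]
    · simp only [mul_assoc]; rw [hc.eq]

lemma br_A_comm {a k i : ℕ} (h : i < k) (hk : k < n) :
    c.A (c.g i * br c.g a k) (br c.g a k * c.g i) := by
  rcases Nat.eq_zero_or_pos i with rfl | hi
  · exact br_comm_zero hk
  · exact A.of_eq (br_comm_low hi h hk).eq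

lemma blk_comm {a k p i : ℕ} (h1 : 1 ≤ i) (h2 : i < k) (hk : k < n) :
    Commute (c.g i) (blk c.g k p a) := by
  unfold blk
  refine Commute.mul_right ?_ (commute_asc fun j hj _ => comm' (Or.inl (by omega)))
  split_ifs
  · exact Commute.one_right _
  · exact br_comm_low h1 h2 hk

lemma blk_A_comm {a k p i : ℕ} (h2 : i < k) (hk : k < n) :
    c.A (c.g i * blk c.g k p a) (blk c.g k p a * c.g i) := by
  unfold blk
  have hc : Commute (c.g i) (asc c.g (k + 1) (p - 1)) :=
    commute_asc fun j hj _ => comm' (Or.inl (by omega))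
  split_ifs
  · simpa using A.of_eq hc.eq
  · have h := (br_A_comm (a := a) h2 hk (c := c)).mul_right (asc c.g (k + 1) (p - 1))
    refine (A.of_eq (mul_assoc _ _ _).symm).trans (h.trans (A.of_eq ?_))
    simp only [mul_assoc]; rw [hc.eq]

lemma bw_comm {L : List (ℕ × ℕ)} {k i : ℕ} (hL : ∀ x ∈ L, 1 ≤ x.1) (h1 : 1 ≤ i) (h2 : i < k)
    (hk : k + tot L ≤ n) : Commute (c.g i) (bw c.g k L) := by
  induction L generalizing k with
  | nil => exact Commute.one_right _
  | cons x L ih =>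
    have hx := hL x (by simp)
    rw [tot_cons] at hk
    exact (blk_comm h1 h2 (by omega)).mul_right
      (ih (fun y hy => hL y (by simp [hy])) (by omega) (by omega))

lemma A_comm_mul {x y z : M} (h : c.A (z * x) (x * z)) (h' : c.A (z * y) (y * z)) :
    c.A (z * (x * y)) (x * y * z) := by
  have h1 := h.mul_right y
  have h2 := h'.mul_left x
  simp only [mul_assoc] at h1 h2 ⊢
  exact h1.trans h2

lemma bw_A_comm {L : List (ℕ × ℕ)} {k i : ℕ} (hL : ∀ x ∈ L, 1 ≤ x.1) (h2 : i < k)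
    (hk : k + tot L ≤ n) : c.A (c.g i * bw c.g k L) (bw c.g k L * c.g i) := by
  induction L generalizing k with
  | nil => exact A.of_eq (by simp [bw])
  | cons x L ih =>
    have hx := hL x (by simp)
    rw [tot_cons] at hk
    exact A_comm_mul (blk_A_comm h2 (by omega))
      (ih (fun y hy => hL y (by simp [hy])) (by omega) (by omega))

end Ctx
end CocenterSpan

/-! ### Decomposition into blocks -/

namespace CocenterSpan

namespace Ctx

variable {M : Type*} [Monoid M] {r n : ℕ} {c : Ctx M r n}

/-- A coarse normal form up to shorter words: apart from reducible words, `P (j+1)` is the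
union of `P j`, the double coset `P j * s_j * P j` and the cosets
`P j * (s_j ⋯ s_1 t^a s_1 ⋯ s_j)` with `0 < a < r`. -/
lemma normal_form {j : ℕ} (hj : j < n) {x : M} (hx : x ∈ c.P (j + 1)) :
    c.D0 x ∨ (∃ w ∈ c.P j, c.A x w) ∨
      (1 ≤ j ∧ ∃ w ∈ c.P j, ∃ w' ∈ c.P j, c.A x (w * c.g j * w')) ∨
      (∃ w ∈ c.P j, ∃ a, 1 ≤ a ∧ a < r ∧ c.A x (w * br c.g a j)) := by
  induction j generalizing x with
  | zero =>
    have h1 : ({x | ∃ i, i < 0 + 1 ∧ x = c.g i} : Set M) = {c.g 0} := by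
      ext y; simp
    rw [P, h1, Submonoid.mem_closure_singleton] at hx
    obtain ⟨a, rfl⟩ := hx
    rcases Nat.lt_or_ge a r with h | h
    · rcases Nat.eq_zero_or_pos a with rfl | h0
      · exact Or.inr (Or.inl ⟨1, one_mem _, A.of_eq (by simp)⟩)
      · exact Or.inr (Or.inr (Or.inr ⟨1, one_mem _, a, h0, h, A.of_eq (by simp [br])⟩))
    · left
      rw [show a = r + (a - r) by omega, pow_add]
      exact D0_t.mul_right _
  | succ j ih =>
    rw [P] at hx
    induction hx using Submonoid.closure_induction_right with
    | one => exact Or.inr (Or.inl ⟨1, one_mem _, A.refl _⟩)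
    | mul_right x hx y hy hx' =>
      obtain ⟨i, hi, rfl⟩ := hy
      rcases hx' with hd | ⟨w, hw, hA⟩ | ⟨-, w, hw, w', hw', hA⟩ | ⟨w, hw, a, ha, har, hA⟩
      · exact Or.inl (hd.mul_right _)
      · rcases Nat.lt_succ_iff_lt_or_eq.mp hi with h | rfl
        · exact Or.inr (Or.inl ⟨w * c.g i, mul_mem hw (g_mem h), hA.mul_right _⟩)
        · exact Or.inr (Or.inr (Or.inl ⟨by omega, w, hw, 1, one_mem _,
            by simpa using hA.mul_right _⟩))
      · rcases Nat.lt_succ_iff_lt_or_eq.mp hi with h | rfl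
        · exact Or.inr (Or.inr (Or.inl ⟨by omega, w, hw, w' * c.g i, mul_mem hw' (g_mem h), by
            simpa only [mul_assoc] using hA.mul_right (c.g i)⟩))
        · have hc : ∀ v ∈ c.P j, Commute v (c.g (j + 1)) := fun v hv =>
            commute_of_mem hv fun i hi => comm' (Or.inl (by omega))
          rcases ih (by omega) hw' with hd | ⟨v, hv, hB⟩ | ⟨h1, v, hv, v', hv', hB⟩ |
            ⟨v, hv, a, ha, har, hB⟩
          · exact Or.inl (D0.of_A (hA.mul_right _) ((hd.mul_left _).mul_right _))
          · left
            refine D0.of_A ((hA.trans (hB.mul_left _)).mul_right _) ?_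
            have := (D0_sq (c := c) (i := j + 1) (by omega) (by omega)).mul w v
            simp only [mul_assoc] at this ⊢
            rwa [(hc v hv).eq]
          · refine Or.inr (Or.inr (Or.inl ⟨by omega, w * v * c.g j,
              mul_mem (mul_mem hw (P_mono (by omega) hv)) (g_mem (by omega)), c.g j * v',
              mul_mem (g_mem (by omega)) (P_mono (by omega) hv'), ?_⟩))
            refine ((hA.trans (hB.mul_left _)).mul_right _).trans (A.of_eq ?_)
            have hb := c.braid j h1 (by omega)
            calc _ = w * (c.g (j + 1) * v) * c.g j * (v' * c.g (j + 1)) := by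
                  simp only [mul_assoc]
              _ = w * v * (c.g (j + 1) * c.g j * c.g (j + 1)) * v' := by
                  rw [← (hc v hv).eq, (hc v' hv').eq]; simp only [mul_assoc]
              _ = _ := by rw [← hb]; simp only [mul_assoc]
          · refine Or.inr (Or.inr (Or.inr ⟨w * v, mul_mem hw (P_mono (by omega) hv), a, ha, har,
              ?_⟩))
            refine ((hA.trans (hB.mul_left _)).mul_right _).trans (A.of_eq ?_)
            calc _ = w * (c.g (j + 1) * v) * (br c.g a j * c.g (j + 1)) := by
                  simp only [mul_assoc]
              _ = _ := by rw [← (hc v hv).eq, br]; simp only [mul_assoc]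
      · rcases Nat.lt_succ_iff_lt_or_eq.mp hi with h | rfl
        · refine Or.inr (Or.inr (Or.inr ⟨w * c.g i, mul_mem hw (g_mem h), a, ha, har, ?_⟩))
          have := (br_A_comm (c := c) (a := a) h hj).symm.mul_left w
          refine (hA.mul_right _).trans ?_
          simpa only [mul_assoc] using this
        · left
          refine D0.of_A (hA.mul_right _) ?_
          have := (D0_sq (c := c) (i := j + 1) (by omega) (by omega)).mul_left
            (w * (c.g (j + 1) * br c.g a j))
          simpa only [mul_assoc, br] using this

/-- Splitting off the block containing the last position `m`, in front of a factor `s` that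
commutes with all letters involved. The word `s_{k+1} ⋯ s_{m-1}` is the part of the cycle through
the last position that has been found so far. -/
lemma extract {m : ℕ} (hm : m ≤ n) {s : M} (hs : ∀ i < m, c.A (c.g i * s) (s * c.g i))
    {k : ℕ} (hk : k + 1 ≤ m) {x : M} (hx : x ∈ c.P (k + 1)) :
    c.D (x * asc c.g (k + 1) (m - (k + 1)) * s) ∨
      ∃ k' a, k' < m ∧ (a = 0 ∨ a < r) ∧ ∃ w ∈ c.P k',
        c.E (x * asc c.g (k + 1) (m - (k + 1)) * s) (w * (blk c.g k' (m - k') a * s)) := by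
  induction k generalizing x with
  | zero =>
    rcases normal_form (by omega) hx with hd | ⟨w, hw, hA⟩ | ⟨h1, -⟩ | ⟨w, hw, a, ha, har, hA⟩
    · exact Or.inl (by simpa only [mul_assoc] using (hd.mul_right _).toD)
    · refine Or.inr ⟨0, 0, by omega, Or.inl rfl, w, hw, ?_⟩
      have := (hA.mul_right (asc c.g (0 + 1) (m - (0 + 1)) * s)).toE
      simpa [blk, mul_assoc] using this
    · omega
    · refine Or.inr ⟨0, a, by omega, Or.inr har, w, hw, ?_⟩
      have := (hA.mul_right (asc c.g (0 + 1) (m - (0 + 1)) * s)).toE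
      simpa [blk, mul_assoc, show a ≠ 0 by omega] using this
  | succ k ih =>
    have hsub : m - (k + 1) - 1 = m - (k + 1 + 1) := by omega
    rcases normal_form (by omega) hx with hd | ⟨w, hw, hA⟩ | ⟨h1, w, hw, w', hw', hA⟩ |
      ⟨w, hw, a, ha, har, hA⟩
    · exact Or.inl (by simpa only [mul_assoc] using (hd.mul_right _).toD)
    · refine Or.inr ⟨k + 1, 0, by omega, Or.inl rfl, w, hw, ?_⟩
      have := (hA.mul_right (asc c.g (k + 1 + 1) (m - (k + 1 + 1)) * s)).toE
      simpa [blk, mul_assoc, hsub] using this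
    -- the right factor is moved to the front by a cyclic shift
    · have hE : c.E (x * asc c.g (k + 1 + 1) (m - (k + 1 + 1)) * s)
          (w' * w * asc c.g (k + 1) (m - (k + 1)) * s) := by
        have hc : Commute w' (asc c.g (k + 1 + 1) (m - (k + 1 + 1))) :=
          commute_of_mem hw' fun i hi => commute_asc fun j hj _ => comm' (Or.inl (by omega))
        have hc' : c.A (w' * s) (s * w') :=
          A_commute_of_mem hw' fun i hi => hs i (by omega)
        have e1 := (hA.mul_right (asc c.g (k + 1 + 1) (m - (k + 1 + 1)) * s)).toE
        have e2 := (hc'.mul_left (w * asc c.g (k + 1) (m - (k + 1)))).toE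
        have e3 := c.cyc (w * asc c.g (k + 1) (m - (k + 1)) * s) w'
        have h4 : w * c.g (k + 1) * w' * (asc c.g (k + 1 + 1) (m - (k + 1 + 1)) * s)
            = w * asc c.g (k + 1) (m - (k + 1)) * (w' * s) := by
          rw [show m - (k + 1) = m - (k + 1 + 1) + 1 by omega, asc_succ']
          calc _ = w * c.g (k + 1) * (w' * asc c.g (k + 1 + 1) (m - (k + 1 + 1))) * s := by
                simp only [mul_assoc]
            _ = _ := by rw [hc.eq]; simp only [mul_assoc]
        rw [h4] at e1
        simp only [mul_assoc] at e1 e2 e3 ⊢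
        exact c.trans e1 (c.trans e2 e3)
      rcases ih (by omega) (mul_mem hw' hw) with hd | ⟨k', a, hk', ha, v, hv, hE'⟩
      · exact Or.inl (c.D_of_E hE hd)
      · exact Or.inr ⟨k', a, hk', ha, v, hv, c.trans hE hE'⟩
    · refine Or.inr ⟨k + 1, a, by omega, Or.inr har, w, hw, ?_⟩
      have := (hA.mul_right (asc c.g (k + 1 + 1) (m - (k + 1 + 1)) * s)).toE
      simpa [blk, mul_assoc, show a ≠ 0 by omega, hsub] using this

/-- Every word is reducible or, in the cocenter and up to shorter words, a product of blocks. The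
factor `s` stands for the blocks already split off. -/
lemma exists_blocks {m : ℕ} (hm : m ≤ n) {s : M}
    (hs : ∀ i < m, c.A (c.g i * s) (s * c.g i)) {x : M} (hx : x ∈ c.P m) :
    c.D (x * s) ∨ ∃ L : List (ℕ × ℕ), (∀ y ∈ L, 1 ≤ y.1 ∧ (y.2 = 0 ∨ y.2 < r)) ∧ tot L = m ∧
      c.E (x * s) (bw c.g 0 L * s) := by
  induction m using Nat.strong_induction_on generalizing s x with
  | _ m ih =>
    rcases Nat.eq_zero_or_pos m with rfl | hpos
    · have hx1 : x = 1 := by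
        have : ({x | ∃ i, i < 0 ∧ x = c.g i} : Set M) = ∅ := by ext; simp
        rwa [P, this, Submonoid.closure_empty, Submonoid.mem_bot] at hx
      exact Or.inr ⟨[], by simp, rfl, by simpa [bw, hx1] using c.refl s⟩
    · obtain ⟨k, rfl⟩ : ∃ k, m = k + 1 := ⟨m - 1, by omega⟩
      have := extract hm hs le_rfl hx
      simp only [Nat.sub_self, asc, mul_one] at this
      rcases this with hd | ⟨k', a, hk', ha, w, hw, hE⟩
      · exact Or.inl hd
      · have hs' : ∀ i < k', c.A (c.g i * (blk c.g k' (k + 1 - k') a * s))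
            (blk c.g k' (k + 1 - k') a * s * c.g i) := fun i hi =>
          A_comm_mul (blk_A_comm hi (by omega)) (hs i (by omega))
        rcases ih k' hk' (by omega) hs' hw with hd | ⟨L, hL, hL', hE'⟩
        · exact Or.inl (c.D_of_E hE hd)
        · refine Or.inr ⟨L ++ [(k + 1 - k', a)], ?_, ?_, ?_⟩
          · intro y hy
            rcases List.mem_append.mp hy with h | h
            · exact hL y h
            · rw [List.mem_singleton] at h
              subst h
              exact ⟨by simp only; omega, ha⟩
          · rw [tot_append, hL']; simp [tot]; omega
          · have h := c.trans hE hE'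
            rw [bw_append, hL']
            simpa [bw, mul_assoc] using h

end Ctx
end CocenterSpan

/-! ### Exchanging and sorting blocks -/

namespace CocenterSpan

namespace Ctx

variable {M : Type*} [Monoid M] {r n : ℕ} {c : Ctx M r n}

/-- A cyclic shift inside a word: the factor `z` is carried around the word through the outer
factors, with which it commutes. -/
lemma rotate {x y z s : M} (hx : Commute z x) (hs : Commute z s) :
    c.E (x * (z * y) * s) (x * (y * z) * s) := by
  have h := c.cyc z (x * y * s)
  have h1 : x * (z * y) * s = z * (x * y * s) := by
    simp only [← mul_assoc]; rw [hx.eq]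
  have h2 : x * (y * z) * s = x * y * s * z := by
    simp only [mul_assoc]; rw [hs.eq]
  rwa [h1, h2]

/-- A power of `s_a ⋯ s_{a+m-1}` exchanges two adjacent cycles that fill the same positions. -/
lemma cycle_swap {a p q : ℕ} (ha : 1 ≤ a) (hm : a + (p + q + 1) ≤ n) :
    SemiconjBy (asc c.g a (p + q + 1) ^ (q + 1)) (asc c.g a p * asc c.g (a + (p + 1)) q)
      (asc c.g a q * asc c.g (a + (q + 1)) p) := by
  have h1 : SemiconjBy (asc c.g a (p + q + 1) ^ (q + 1)) (asc c.g a p)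
      (asc c.g (a + (q + 1)) p) := semiconj_asc fun i hi => by
    have := shift_pow (c := c) (i := a + i) (j := q + 1) ha hm (by omega) (by omega)
    rwa [show a + (q + 1) + i = a + i + (q + 1) by omega]
  have h2 : SemiconjBy (asc c.g a (p + q + 1) ^ (q + 1)) (asc c.g (a + (p + 1)) q)
      (asc c.g a q) := semiconj_asc fun i hi => by
    -- the letter is shifted up to the last position, wraps around, and is shifted up again
    have e1 := shift_pow (c := c) (i := a + (p + 1) + i) (j := q - 1 - i) ha hm
      (by omega) (by omega)
    have e2 := shift_sq (c := c) (m := p + q) ha hm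
    have e3 := shift_pow (c := c) (i := a) (j := i) ha hm (by omega) (by omega)
    rw [show a + (p + 1) + i + (q - 1 - i) = a + (p + q) by omega] at e1
    have e := e3.mul_left (e2.mul_left e1)
    rwa [← pow_add, ← pow_add, show i + (2 + (q - 1 - i)) = q + 1 by omega] at e
  have h3 : Commute (asc c.g a q) (asc c.g (a + (q + 1)) p) :=
    commute_asc fun i hi _ => (commute_asc fun j _ hj => comm' (Or.inr (by omega))).symm
  rw [h3.eq]
  exact h1.mul_right h2

variable {k m : ℕ} {x s : M}

lemma commute_X (hx : x ∈ c.P k) {i : ℕ} (hi : k + 1 ≤ i) : Commute (c.g i) x :=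
  (commute_of_mem hx fun _ _ => comm' (Or.inl (by omega))).symm

lemma swap_zero_zero {p q : ℕ} (hx : x ∈ c.P k) (hn : k + (p + q + 2) ≤ n)
    (hs : ∀ i, 1 ≤ i → i < k + (p + q + 2) → Commute (c.g i) s) :
    c.E (x * (asc c.g (k + 1) p * asc c.g (k + 1 + (p + 1)) q) * s)
      (x * (asc c.g (k + 1) q * asc c.g (k + 1 + (q + 1)) p) * s) := by
  set z := asc c.g (k + 1) (p + q + 1) with hz
  have hsc : SemiconjBy (z ^ (q + 1)) _ _ :=
    cycle_swap (c := c) (a := k + 1) (p := p) (q := q) (by omega) (by omega)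
  have hzx : Commute (z ^ (q + 1)) x :=
    (commute_asc fun i hi _ => (commute_X hx hi).symm).symm.pow_left _
  have hzs : Commute (z ^ (q + 1)) s :=
    (commute_asc fun i hi _ => (hs i (by omega) (by omega)).symm).symm.pow_left _
  refine c.conj (z ^ (q + 1)) _ _ (pow_mem ?_ _)
    (SemiconjBy.mul_right (SemiconjBy.mul_right hzx hsc) hzs)
  have : ∀ l, l ≤ p + q + 1 → asc c.g (k + 1) l ∈
      Submonoid.closure {x | ∃ i, 1 ≤ i ∧ i < n ∧ x = c.g i} := by
    intro l hl
    induction l with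
    | zero => exact one_mem _
    | succ l ih =>
      exact mul_mem (ih (by omega)) (Submonoid.subset_closure ⟨_, by omega, by omega, rfl⟩)
  exact this _ le_rfl

lemma shift_pal {a i l : ℕ} (ha : 1 ≤ a) (hm : a + m ≤ n) (h1 : a ≤ i) (h2 : i + l + 1 < a + m) :
    asc c.g a m * pal c.g i l = pal c.g (i + 1) l * asc c.g a m :=
  semiconj_pal fun j hj => by
    have := shift (c := c) (i := i + j) ha hm (by omega) (by omega)
    rwa [show i + 1 + j = i + j + 1 by omega]

/-- A square appears where an ascending product meets the palindrome ending in its last letter. -/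
lemma D0_asc_pal {a i l : ℕ} (hm : a + m < n) (hi : 1 ≤ i) (h2 : i + l = a + m) :
    c.D0 (asc c.g a (m + 1) * pal c.g i l) := by
  obtain ⟨y, hy⟩ := pal_left c.g i l
  rw [hy, asc, h2]
  have := (D0_sq (c := c) (i := a + m) (by omega) (by omega)).mul (asc c.g a m) y
  simpa only [mul_assoc] using this

/-- An uncoloured block in front of a coloured one can be shortened: conjugation shifts the
palindrome up until it meets the end of the ascending product. -/
lemma D_pal {b l d i : ℕ} (hx : x ∈ c.P k) (hm : k + m + 1 < n)
    (hs : ∀ i, 1 ≤ i → i < k + m + 2 → Commute (c.g i) s) (hi : i + l + d = m) :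
    c.D (x * (asc c.g (k + 1) (m + 1) * pal c.g (k + 1 + i) l * br c.g b k) * s) := by
  induction d generalizing i with
  | zero =>
    exact ((D0_asc_pal (c := c) (by omega) (by omega) (by omega)).mul_right _).mul _ _ |>.toD
  | succ d ih =>
    refine c.D_of_E ?_ (ih (i := i + 1) (by omega))
    rw [shift_pal (by omega) (by omega) (by omega) (by omega), mul_assoc (pal _ _ _)]
    have hpb : Commute (pal c.g (k + 1 + i + 1) l) (br c.g b k) :=
      (commute_pal fun j hj _ => (br_comm_high (by omega)).symm).symm
    refine c.trans (rotate ?_ ?_) ?_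
    · exact (commute_pal fun j hj _ => (commute_X hx (by omega)).symm).symm
    · exact (commute_pal fun j hj _ => (hs j (by omega) (by omega)).symm).symm
    · rw [mul_assoc (asc _ _ _) (br _ _ _), ← hpb.eq, ← mul_assoc (asc _ _ _)]
      exact c.refl _

lemma asc_mul_br {b p : ℕ} (hp : k + p + 1 < n) :
    asc c.g (k + 1) p * br c.g b (k + (p + 1))
      = pal c.g (k + 1) p * br c.g b k * asc c.g (k + 1) (p + 1) := by
  rw [br_add, ← mul_assoc, ← mul_assoc, asc_mul_des (by omega) (by omega)]

/-- A word with an uncoloured block immediately before a coloured one is reducible. -/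
lemma D_zero_colour {p q b : ℕ} (hx : x ∈ c.P k) (hn : k + (p + q + 2) ≤ n)
    (hs : ∀ i, 1 ≤ i → i < k + (p + q + 2) → Commute (c.g i) s) :
    c.D (x * (asc c.g (k + 1) p * (br c.g b (k + (p + 1)) * asc c.g (k + (p + 1) + 1) q)) * s) := by
  have h0 := D_pal (c := c) (b := b) (l := p) (d := q) (i := 0) (m := p + q) hx (by omega)
    (fun i h1 h2 => hs i h1 (by omega)) (by omega)
  have e : asc c.g (k + 1) p * (br c.g b (k + (p + 1)) * asc c.g (k + (p + 1) + 1) q)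
      = (pal c.g (k + 1) p * br c.g b k) * asc c.g (k + 1) (p + q + 1) := by
    rw [← mul_assoc, asc_mul_br (by omega), mul_assoc, show p + q + 1 = (p + 1) + q by omega,
      asc_add c.g (k + 1) (p + 1), show k + (p + 1) + 1 = k + 1 + (p + 1) by omega]
  rw [e]
  refine c.D_of_E (c.symm (rotate ?_ ?_)) (by simpa only [mul_assoc, add_zero] using h0)
  · exact (commute_asc fun j hj _ => (commute_X hx (by omega)).symm).symm
  · exact (commute_asc fun j hj _ => (hs j (by omega) (by omega)).symm).symm

/-- Two coloured blocks: the palindrome in the middle is unrolled two letters at a time, until it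
is exhausted or meets the end of the ascending product. -/
lemma unroll {a b l i : ℕ} (hx : x ∈ c.P k) (hm : k + m + 1 < n)
    (hs : ∀ i, 1 ≤ i → i < k + m + 2 → Commute (c.g i) s) (hi : 2 * i + l ≤ m) :
    m < 2 * (i + l) ∧ c.D (x * (br c.g a k * asc c.g (k + 1) (2 * i) *
      pal c.g (k + 1 + 2 * i) l * br c.g b k * asc c.g (k + 1) (m + 1)) * s) ∨
    2 * (i + l) ≤ m ∧ c.E (x * (br c.g a k * asc c.g (k + 1) (2 * i) * pal c.g (k + 1 + 2 * i) l *
      br c.g b k * asc c.g (k + 1) (m + 1)) * s)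
      (x * (br c.g a k * asc c.g (k + 1) (2 * (i + l) + 1) * br c.g b k *
      asc c.g (k + 1) (m + 1)) * s) := by
  induction l generalizing i with
  | zero =>
    refine Or.inr ⟨by omega, ?_⟩
    rw [mul_assoc (br c.g a k)]
    exact c.refl _
  | succ l ih =>
    set C := asc c.g (k + 1) (m + 1) with hC
    set Y := des c.g (k + 1 + 2 * i + 1) (l + 1) with hY
    set Z := asc c.g (k + 1 + 2 * i + 1) (l + 1) with hZ
    set g₀ := c.g (k + 1 + 2 * i) with hg₀
    set g₁ := c.g (k + 1 + 2 * i + 1) with hg₁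
    set Q := pal c.g (k + 1 + 2 * i + 1) l with hQ
    have hYX : ∀ w : M, (∀ j, k + 2 + 2 * i ≤ j → j ≤ k + 2 + 2 * i + l → Commute w (c.g j)) →
        Commute Y w := fun w hw =>
      (commute_des fun j h1 h2 => hw j (by omega) (by omega)).symm
    have hYa : Commute Y (br c.g a k) := hYX _ fun j h1 _ => (br_comm_high (by omega)).symm
    have hYasc : Commute Y (asc c.g (k + 1) (2 * i)) := hYX _ fun j h1 _ =>
      (commute_asc fun j' _ h' => comm' (Or.inr (by omega))).symm
    have hYx : Commute Y x := hYX _ fun j h1 _ => (commute_X hx (by omega)).symm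
    have hYs : Commute Y s := hYX _ fun j h1 _ => (hs j (by omega) (by omega)).symm
    have hZb : Commute Z (br c.g b k) :=
      (commute_asc fun j hj _ => (br_comm_high (by omega)).symm).symm
    have hZC : C * asc c.g (k + 1 + 2 * i) (l + 1) = Z * C := semiconj_asc fun j hj => by
      have := shift (c := c) (i := k + 1 + 2 * i + j) (a := k + 1) (m := m + 1)
        (by omega) (by omega) (by omega) (by omega)
      rwa [show k + 1 + 2 * i + 1 + j = k + 1 + 2 * i + j + 1 by omega]
    have hgC : C * g₀ = g₁ * C := shift (by omega) (by omega) (by omega) (by omega)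
    have hgb : Commute g₁ (br c.g b k) := br_comm_high (by omega)
    have hZY : asc c.g (k + 1 + 2 * i) (l + 1) * Y = g₀ * Q := by
      rw [asc_succ', mul_assoc, asc_mul_des (by omega) (by omega)]
    -- the descending half of the palindrome is carried around by a cyclic shift
    have hE : c.E (x * (br c.g a k * asc c.g (k + 1) (2 * i) * pal c.g (k + 1 + 2 * i) (l + 1) *
          br c.g b k * C) * s)
        (x * (br c.g a k * asc c.g (k + 1) (2 * (i + 1)) * br c.g b k * (C * Q)) * s) := by
      have e1 : br c.g a k * asc c.g (k + 1) (2 * i) * pal c.g (k + 1 + 2 * i) (l + 1) *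
          br c.g b k * C = Y * (br c.g a k * asc c.g (k + 1) (2 * i) * g₀ * br c.g b k * Z * C) := by
        rw [pal_eq]
        calc _ = (br c.g a k * asc c.g (k + 1) (2 * i) * Y) * g₀ * (Z * br c.g b k) * C := by
              simp only [mul_assoc, hY, hZ, hg₀]
          _ = _ := by rw [← (hYa.mul_right hYasc).eq, hZb.eq]; simp only [mul_assoc]
      have e2 : br c.g a k * asc c.g (k + 1) (2 * i) * g₀ * br c.g b k * Z * C * Y
          = br c.g a k * asc c.g (k + 1) (2 * (i + 1)) * br c.g b k * (C * Q) := by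
        have e3 : asc c.g (k + 1) (2 * (i + 1)) = asc c.g (k + 1) (2 * i) * g₀ * g₁ := rfl
        calc _ = br c.g a k * asc c.g (k + 1) (2 * i) * g₀ * br c.g b k * (Z * C) * Y := by
              simp only [mul_assoc]
          _ = br c.g a k * asc c.g (k + 1) (2 * i) * g₀ * br c.g b k * (C * g₀) * Q := by
              rw [← hZC]; simp only [mul_assoc, hZY]
          _ = br c.g a k * asc c.g (k + 1) (2 * i) * g₀ * (br c.g b k * g₁) * C * Q := by
              rw [hgC]; simp only [mul_assoc]
          _ = _ := by rw [← hgb.eq, e3]; simp only [mul_assoc]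
      rw [e1, ← e2]
      exact rotate hYx hYs
    rcases Nat.lt_or_ge (2 * i + (l + 1)) m with h | h
    · have hQC : C * Q = pal c.g (k + 1 + 2 * (i + 1)) l * C :=
        shift_pal (by omega) (by omega) (by omega) (by omega)
      have hQb : Commute (pal c.g (k + 1 + 2 * (i + 1)) l) (br c.g b k) :=
        (commute_pal fun j hj _ => (br_comm_high (by omega)).symm).symm
      have e : br c.g a k * asc c.g (k + 1) (2 * (i + 1)) * br c.g b k * (C * Q)
          = br c.g a k * asc c.g (k + 1) (2 * (i + 1)) * pal c.g (k + 1 + 2 * (i + 1)) l *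
            br c.g b k * C := by
        rw [hQC]
        calc _ = br c.g a k * asc c.g (k + 1) (2 * (i + 1)) *
              (br c.g b k * pal c.g (k + 1 + 2 * (i + 1)) l) * C := by simp only [mul_assoc]
          _ = _ := by rw [← hQb.eq]; simp only [mul_assoc]
      rw [e] at hE
      rcases ih (i := i + 1) (by omega) with ⟨h1, hd⟩ | ⟨h1, hE'⟩
      · exact Or.inl ⟨by omega, c.D_of_E hE hd⟩
      · refine Or.inr ⟨by omega, c.trans hE ?_⟩
        rwa [show i + (l + 1) = i + 1 + l by omega]
    · left
      refine ⟨by omega, c.D_of_E hE ?_⟩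
      have : c.D0 (C * Q) := D0_asc_pal (by omega) (by omega) (by omega)
      exact ((this.mul_left _).mul _ _).toD

/-- Two adjacent coloured blocks: if the first one is longer, the word is reducible; otherwise it
is equivalent to a word in which both colours sit after position `k`. -/
lemma colour_colour {p q a b : ℕ} (hx : x ∈ c.P k) (hn : k + (p + q + 2) ≤ n)
    (hs : ∀ i, 1 ≤ i → i < k + (p + q + 2) → Commute (c.g i) s) :
    q < p ∧ c.D (x * (br c.g a k * asc c.g (k + 1) p *
      (br c.g b (k + (p + 1)) * asc c.g (k + (p + 1) + 1) q)) * s) ∨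
    p ≤ q ∧ c.E (x * (br c.g a k * asc c.g (k + 1) p *
      (br c.g b (k + (p + 1)) * asc c.g (k + (p + 1) + 1) q)) * s)
      (x * (br c.g a k * asc c.g (k + 1) (2 * p + 1) * br c.g b k *
      asc c.g (k + 1) (p + q + 1)) * s) := by
  have e : br c.g a k * asc c.g (k + 1) p *
      (br c.g b (k + (p + 1)) * asc c.g (k + (p + 1) + 1) q)
      = br c.g a k * asc c.g (k + 1) (2 * 0) * pal c.g (k + 1 + 2 * 0) p * br c.g b k *
        asc c.g (k + 1) (p + q + 1) := by
    calc _ = br c.g a k * (asc c.g (k + 1) p * br c.g b (k + (p + 1))) *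
          asc c.g (k + (p + 1) + 1) q := by simp only [mul_assoc]
      _ = _ := by
        rw [asc_mul_br (by omega), show p + q + 1 = (p + 1) + q by omega,
          asc_add c.g (k + 1) (p + 1), show k + (p + 1) + 1 = k + 1 + (p + 1) by omega]
        simp [asc, mul_assoc]
  rw [e]
  have := unroll (c := c) (a := a) (b := b) (l := p) (i := 0) (m := p + q) hx (by omega)
    (fun i h1 h2 => hs i h1 (by omega)) (by omega)
  rw [zero_add] at this
  exact this.imp (fun h => ⟨by omega, h.2⟩) fun h => ⟨by omega, h.2⟩

/-- Coloured blocks of the same size can be exchanged: both orders are equivalent to a word in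
which the two colours play symmetric roles. -/
lemma swap_colour {p a b : ℕ} (hx : x ∈ c.P k) (hn : k + (p + p + 2) ≤ n)
    (hs : ∀ i, 1 ≤ i → i < k + (p + p + 2) → Commute (c.g i) s)
    (hs' : ∀ i < k + (p + p + 2), c.A (c.g i * s) (s * c.g i)) :
    c.E (x * (br c.g a k * asc c.g (k + 1) p *
      (br c.g b (k + (p + 1)) * asc c.g (k + (p + 1) + 1) p)) * s)
      (x * (br c.g b k * asc c.g (k + 1) p *
      (br c.g a (k + (p + 1)) * asc c.g (k + (p + 1) + 1) p)) * s) := by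
  set C := asc c.g (k + 1) (p + p + 1) with hC
  have hmid : c.E (x * (br c.g a k * C * br c.g b k * C) * s)
      (x * (br c.g b k * C * br c.g a k * C) * s) := by
    have hmem : br c.g b k * C ∈ c.P (k + (p + p + 2)) :=
      mul_mem (br_mem (by omega)) (asc_mem (by omega))
    have h1 : c.A (br c.g b k * C * s) (s * (br c.g b k * C)) := A_commute_of_mem hmem hs'
    have h2 : c.A (x * (br c.g b k * C)) (br c.g b k * C * x) :=
      A_commute_of_mem hx fun i hi => A_comm_mul (br_A_comm hi (by omega))
        (A.of_eq (commute_asc fun j hj _ => comm' (Or.inl (by omega))).eq)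
    have e1 := (h1.mul_left (x * (br c.g a k * C))).toE
    have e2 := c.cyc (x * (br c.g a k * C) * s) (br c.g b k * C)
    have e3 := (h2.symm.mul_right (br c.g a k * C * s)).toE
    simp only [mul_assoc] at e1 e2 e3 ⊢
    exact c.trans e1 (c.trans e2 e3)
  have hpp : 2 * p + 1 = p + p + 1 := by omega
  rcases colour_colour (c := c) (a := a) (b := b) hx hn hs with ⟨h, -⟩ | ⟨-, hE⟩
  · omega
  rcases colour_colour (c := c) (a := b) (b := a) hx hn hs with ⟨h, -⟩ | ⟨-, hE'⟩
  · omega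
  rw [hpp] at hE hE'
  exact c.trans hE (c.trans hmid (c.symm hE'))

/-- The order in which the blocks are arranged: coloured blocks before uncoloured ones, then by
size, then by colour. -/
def key (x : ℕ × ℕ) : ℕ ×ₗ ℕ ×ₗ ℕ :=
  toLex (if x.2 = 0 then 1 else 0, toLex (x.1, x.2))

lemma key_injective : Function.Injective key := by
  rintro ⟨p, a⟩ ⟨q, b⟩ h
  have h1 := congrArg (fun z => (ofLex (ofLex z).2)) h
  simpa [key] using h1

/-- Two adjacent blocks in the wrong order can be exchanged, unless the word is reducible. -/
lemma swap_blocks {x y : ℕ × ℕ} {pre suf : List (ℕ × ℕ)}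
    (hL : ∀ z ∈ pre ++ x :: y :: suf, 1 ≤ z.1) (ht : tot (pre ++ x :: y :: suf) ≤ n)
    (hxy : ¬ key x ≤ key y) :
    c.D (bw c.g 0 (pre ++ x :: y :: suf)) ∨
      c.E (bw c.g 0 (pre ++ x :: y :: suf)) (bw c.g 0 (pre ++ y :: x :: suf)) := by
  obtain ⟨p, a⟩ := x
  obtain ⟨q, b⟩ := y
  have hp := hL (p, a) (by simp)
  have hq := hL (q, b) (by simp)
  obtain ⟨p, rfl⟩ : ∃ p', p = p' + 1 := ⟨p - 1, by simp only at hp; omega⟩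
  obtain ⟨q, rfl⟩ : ∃ q', q = q' + 1 := ⟨q - 1, by simp only at hq; omega⟩
  have hsuf : ∀ z ∈ suf, 1 ≤ z.1 := fun z hz => hL z (by simp [hz])
  simp only [tot_append, tot_cons] at ht
  have hx : bw c.g 0 pre ∈ c.P (tot pre) :=
    bw_mem (fun z hz => hL z (by simp [hz])) (by omega)
  set k := tot pre with hk
  have hs : ∀ i, 1 ≤ i → i < k + (p + q + 2) → Commute (c.g i) (bw c.g (k + (p + q + 2)) suf) :=
    fun i h1 h2 => bw_comm hsuf h1 h2 (by omega)
  have hs' : ∀ i < k + (p + q + 2), c.A (c.g i * bw c.g (k + (p + q + 2)) suf)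
      (bw c.g (k + (p + q + 2)) suf * c.g i) :=
    fun i h2 => bw_A_comm hsuf h2 (by omega)
  have e : ∀ p q a b, bw c.g 0 (pre ++ (p + 1, a) :: (q + 1, b) :: suf) = bw c.g 0 pre *
      (blk c.g k (p + 1) a * blk c.g (k + (p + 1)) (q + 1) b) *
      bw c.g (k + (p + q + 2)) suf := by
    intro p q a b
    rw [bw_append, bw, bw, zero_add, ← hk, show k + (p + 1) + (q + 1) = k + (p + q + 2) by omega]
    simp only [mul_assoc]
  rw [e, e q p, show q + p + 2 = p + q + 2 by omega]
  simp only [blk, Nat.add_sub_cancel]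
  rw [show k + (q + 1) + 1 = k + 1 + (q + 1) by omega]
  by_cases ha : a = 0 <;> by_cases hb : b = 0
  · right
    rw [show k + (p + 1) + 1 = k + 1 + (p + 1) by omega]
    simpa [ha, hb] using swap_zero_zero (c := c) (p := p) (q := q) hx (by omega) hs
  · left
    simpa [ha, hb] using D_zero_colour (c := c) (b := b) (p := p) (q := q) hx (by omega) hs
  · simp [key, ha, hb, Prod.Lex.le_iff] at hxy
  · rw [show k + 1 + (q + 1) = k + (q + 1) + 1 by omega]
    simp only [ha, hb, if_false]
    rcases colour_colour (c := c) (a := a) (b := b) (p := p) (q := q) hx (by omega) hs with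
      ⟨-, h⟩ | ⟨h, -⟩
    · exact Or.inl h
    · right
      obtain rfl : p = q := by
        simp [key, ha, hb, Prod.Lex.le_iff] at hxy
        omega
      exact swap_colour hx (by omega) hs hs'

/-- The blocks in the standard order. -/
abbrev sortBlocks (L : List (ℕ × ℕ)) : List (ℕ × ℕ) := L.insertionSort (fun x y => key x ≤ key y)

lemma tot_perm {L L' : List (ℕ × ℕ)} (h : L.Perm L') : tot L = tot L' := (h.map _).sum_eq

lemma insert_blocks {x : ℕ × ℕ} {L pre : List (ℕ × ℕ)}
    (hL : ∀ z ∈ pre ++ x :: L, 1 ≤ z.1) (ht : tot (pre ++ x :: L) ≤ n) :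
    c.D (bw c.g 0 (pre ++ x :: L)) ∨ c.E (bw c.g 0 (pre ++ x :: L))
      (bw c.g 0 (pre ++ L.orderedInsert (fun x y => key x ≤ key y) x)) := by
  induction L generalizing pre with
  | nil => exact Or.inr (c.refl _)
  | cons y L ih =>
    by_cases hxy : key x ≤ key y
    · rw [List.orderedInsert_cons_of_le (fun x y => key x ≤ key y) L hxy]
      exact Or.inr (c.refl _)
    · rw [List.orderedInsert_of_not_le (fun x y => key x ≤ key y) L hxy]
      have hp : (pre ++ x :: y :: L).Perm (pre ++ [y] ++ x :: L) := by
        simpa using (List.Perm.swap y x L).append_left pre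
      have h := ih (pre := pre ++ [y]) (fun z hz => hL z (hp.mem_iff.2 hz))
        (by rwa [← tot_perm hp])
      rw [List.append_assoc, List.append_assoc] at h
      rcases swap_blocks (c := c) hL ht hxy with hd | hE
      · exact Or.inl hd
      · exact h.imp (c.D_of_E hE) (c.trans hE)

lemma sort_blocks_aux {L pre : List (ℕ × ℕ)}
    (hL : ∀ z ∈ pre ++ L, 1 ≤ z.1) (ht : tot (pre ++ L) ≤ n) :
    c.D (bw c.g 0 (pre ++ L)) ∨ c.E (bw c.g 0 (pre ++ L)) (bw c.g 0 (pre ++ sortBlocks L)) := by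
  induction L generalizing pre with
  | nil => exact Or.inr (c.refl _)
  | cons x L ih =>
    have h := ih (pre := pre ++ [x]) (by simpa using hL) (by simpa using ht)
    have hp : (pre ++ x :: L).Perm (pre ++ x :: sortBlocks L) :=
      ((List.perm_insertionSort _ L).symm.cons x).append_left pre
    simp only [List.append_assoc, List.singleton_append] at h
    rcases h with hd | hE
    · exact Or.inl hd
    · exact (insert_blocks (c := c) (fun z hz => hL z (hp.mem_iff.2 hz))
        (by rwa [← tot_perm hp])).imp (c.D_of_E hE) (c.trans hE)

/-- The normal form: every word is reducible or equivalent to a sorted product of blocks. -/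
theorem exists_sorted {x : M} (hx : x ∈ c.P n) :
    c.D x ∨ ∃ L, (∀ y ∈ L, 1 ≤ y.1 ∧ (y.2 = 0 ∨ y.2 < r)) ∧ tot L = n ∧
      L.Pairwise (fun x y => key x ≤ key y) ∧ c.E x (bw c.g 0 L) := by
  have h := exists_blocks (c := c) (s := 1) le_rfl (fun i _ => A.of_eq (by simp)) hx
  simp only [mul_one] at h
  rcases h with hd | ⟨L, hL, ht, hE⟩
  · exact Or.inl hd
  · have hp := List.perm_insertionSort (fun x y => key x ≤ key y) L
    refine (sort_blocks_aux (c := c) (L := L) (pre := []) (fun z hz => (hL z hz).1) ht.le).imp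
      (c.D_of_E hE) fun h => ⟨sortBlocks L, fun y hy => hL y (hp.mem_iff.1 hy),
        (tot_perm hp).trans ht, ?_, c.trans hE h⟩
    exact List.pairwise_insertionSort _ _

/-- Sorted lists of blocks are determined by their multiset. -/
lemma eq_of_sorted_perm {L L' : List (ℕ × ℕ)} (h : L.Perm L')
    (hL : L.Pairwise (fun x y => key x ≤ key y)) (hL' : L'.Pairwise (fun x y => key x ≤ key y)) :
    L = L' :=
  List.Perm.eq_of_pairwise (fun _ _ _ _ h1 h2 => key_injective (le_antisymm h1 h2)) hL hL' h

end Ctx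
end CocenterSpan

/-! ### The action on coloured positions and the separation of conjugacy classes -/

namespace CocenterSpan

open CRG

section Action

/-- The permutations of `ℕ × ZMod r` (positions with colours) by which the generators act:
`t` changes the colour in position `0`, and `s_i` exchanges the positions `i - 1` and `i`. -/
def pgen (r n i : ℕ) : Equiv.Perm (ℕ × ZMod r) :=
  if n ≤ i then 1 else if i = 0 then
    { toFun := fun z => (z.1, if z.1 = 0 then z.2 + 1 else z.2)
      invFun := fun z => (z.1, if z.1 = 0 then z.2 - 1 else z.2)
      left_inv := fun z => by ext <;> simp; split_ifs <;> simp
      right_inv := fun z => by ext <;> simp; split_ifs <;> simp }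
  else (Equiv.swap (i - 1) i).prodCongr (Equiv.refl _)

variable {r n : ℕ}

lemma pgen_zero (hn : 1 ≤ n) (z : ℕ × ZMod r) :
    pgen r n 0 z = (z.1, if z.1 = 0 then z.2 + 1 else z.2) := by
  rw [pgen, if_neg (by omega), if_pos rfl]; rfl

lemma pgen_succ {i : ℕ} (hi : i + 1 < n) (z : ℕ × ZMod r) :
    pgen r n (i + 1) z = (if z.1 = i then i + 1 else if z.1 = i + 1 then i else z.1, z.2) := by
  rw [pgen, if_neg (by omega), if_neg (by omega)]
  ext <;> simp [Equiv.swap_apply_def]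

lemma pgen_pos {i : ℕ} (h1 : 1 ≤ i) (hi : i < n) (z : ℕ × ZMod r) :
    pgen r n i z = (if z.1 = i - 1 then i else if z.1 = i then i - 1 else z.1, z.2) := by
  obtain ⟨j, rfl⟩ : ∃ j, i = j + 1 := ⟨i - 1, by omega⟩
  rw [pgen_succ hi]; simp

lemma pgen_zero_pow (hn : 1 ≤ n) (a : ℕ) (z : ℕ × ZMod r) :
    (pgen r n 0 ^ a) z = (z.1, if z.1 = 0 then z.2 + a else z.2) := by
  induction a with
  | zero => ext <;> simp
  | succ a ih =>
    rw [pow_succ', Equiv.Perm.mul_apply, ih, pgen_zero hn]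
    ext
    · rfl
    · by_cases h : z.1 = 0 <;> simp [h, add_assoc]

lemma asc_act {k m : ℕ} (h : k + m < n) (z : ℕ × ZMod r) :
    asc (pgen r n) (k + 1) m z = (if k ≤ z.1 ∧ z.1 < k + m then z.1 + 1 else
      if z.1 = k + m then k else z.1, z.2) := by
  induction m generalizing z with
  | zero => ext <;> simp [asc]; split_ifs <;> omega
  | succ m ih =>
    rw [asc, Equiv.Perm.mul_apply, ih (by omega), show k + 1 + m = k + m + 1 by omega,
      pgen_succ (by omega)]
    ext
    · simp only; split_ifs <;> omega
    · rfl

lemma br_act {k a : ℕ} (h : k < n) (z : ℕ × ZMod r) :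
    br (pgen r n) a k z = (z.1, if z.1 = k then z.2 + a else z.2) := by
  induction k generalizing z with
  | zero => exact pgen_zero_pow h a z
  | succ k ih =>
    rw [br, Equiv.Perm.mul_apply, Equiv.Perm.mul_apply, ih (by omega), pgen_succ h, pgen_succ h]
    ext
    · simp only; split_ifs <;> omega
    · simp only
      by_cases h1 : z.1 = k
      · simp [h1]
      · by_cases h2 : z.1 = k + 1 <;> simp [h1, h2]

lemma blk_act {k p a : ℕ} (hp : 1 ≤ p) (h : k + p ≤ n) (z : ℕ × ZMod r) :
    blk (pgen r n) k p a z = if k ≤ z.1 ∧ z.1 + 1 < k + p then (z.1 + 1, z.2) else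
      if z.1 + 1 = k + p then (k, z.2 + a) else z := by
  have h1 : blk (pgen r n) k p a = br (pgen r n) a k * asc (pgen r n) (k + 1) (p - 1) := by
    unfold blk
    split_ifs with ha
    · have : br (pgen r n) a k = 1 := by
        ext1 z; rw [br_act (by omega)]; simp [ha]
      rw [this]
    · rfl
  rw [h1, Equiv.Perm.mul_apply, br_act (by omega), asc_act (by omega)]
  by_cases c1 : k ≤ z.1 ∧ z.1 + 1 < k + p
  · have c2 : k ≤ z.1 ∧ z.1 < k + (p - 1) := by omega
    have c3 : ¬ z.1 + 1 = k := by omega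
    simp [c1, c2, c3]
  · have c2 : ¬ (k ≤ z.1 ∧ z.1 < k + (p - 1)) := by omega
    by_cases c3 : z.1 + 1 = k + p
    · have c4 : z.1 = k + (p - 1) := by omega
      rw [if_neg c1, if_pos c3]
      simp [← c4]
    · have c4 : ¬ z.1 = k + (p - 1) := by omega
      have c5 : ¬ z.1 = k := by omega
      simp only [c1, c2, c3, c4, c5, if_false]

lemma bw_fix {L : List (ℕ × ℕ)} {k : ℕ} (hL : ∀ x ∈ L, 1 ≤ x.1) (h : k + tot L ≤ n)
    {z : ℕ × ZMod r} (hz : z.1 < k) : bw (pgen r n) k L z = z := by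
  induction L generalizing k with
  | nil => rfl
  | cons x L ih =>
    have hx := hL x (by simp)
    rw [tot_cons] at h
    rw [bw, Equiv.Perm.mul_apply, ih (fun y hy => hL y (by simp [hy])) (by omega) (by omega),
      blk_act hx (by omega), if_neg (by omega), if_neg (by omega)]

lemma bw_ge {L : List (ℕ × ℕ)} {k : ℕ} (hL : ∀ x ∈ L, 1 ≤ x.1) (h : k + tot L ≤ n)
    {z : ℕ × ZMod r} (hz : k ≤ z.1) : k ≤ (bw (pgen r n) k L z).1 := by
  by_contra! hlt
  have h1 := bw_fix (r := r) hL h hlt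
  have h2 := (bw (pgen r n) k L).injective h1
  rw [h2] at hlt
  omega

/-- The size and colour of the block containing a given position. -/
def typ : ℕ → List (ℕ × ℕ) → ℕ → ℕ × ℕ
  | _, [], _ => (0, 0)
  | k, y :: L, x => if x < k + y.1 then y else typ (k + y.1) L x

/-- `g` acts on the positions `s, …, s+q-1` as a cycle of colour `b`. -/
def IsCyc (g : Equiv.Perm (ℕ × ZMod r)) (s q b : ℕ) : Prop :=
  ∀ z : ℕ × ZMod r, s ≤ z.1 → z.1 < s + q →
    g z = if z.1 + 1 < s + q then (z.1 + 1, z.2) else (s, z.2 + b)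

/-- A product of blocks acts on the positions of each block as a cycle of its colour. -/
lemma bw_isCyc {L : List (ℕ × ℕ)} {k : ℕ} (hL : ∀ x ∈ L, 1 ≤ x.1) (h : k + tot L ≤ n)
    {x : ℕ} (h1 : k ≤ x) (h2 : x < k + tot L) :
    typ k L x ∈ L ∧ ∃ s, k ≤ s ∧ s ≤ x ∧ x < s + (typ k L x).1 ∧
      IsCyc (bw (pgen r n) k L) s (typ k L x).1 (typ k L x).2 := by
  induction L generalizing k with
  | nil => simp [tot] at h2; omega
  | cons y L ih =>
    have hy := hL y (by simp)
    have hL' : ∀ x ∈ L, 1 ≤ x.1 := fun y hy => hL y (by simp [hy])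
    rw [tot_cons] at h h2
    rw [typ]
    split_ifs with hx
    · refine ⟨by simp, k, le_rfl, h1, hx, fun z hz1 hz2 => ?_⟩
      rw [bw, Equiv.Perm.mul_apply, bw_fix hL' (by omega) hz2, blk_act hy (by omega)]
      by_cases hz : z.1 + 1 < k + y.1
      · rw [if_pos ⟨hz1, hz⟩, if_pos hz]
      · rw [if_neg (by omega), if_pos (by omega), if_neg hz]
    · obtain ⟨hm, s, hs1, hs2, hs3, hc⟩ := ih hL' (k := k + y.1) (by omega) (by omega) (by omega)
      refine ⟨by simp [hm], s, by omega, hs2, hs3, fun z hz1 hz2 => ?_⟩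
      rw [bw, Equiv.Perm.mul_apply, ← hc z hz1 hz2]
      have := bw_ge (r := r) (n := n) (k := k + y.1) (z := z) hL' (by omega) (by omega)
      rw [blk_act hy (by omega), if_neg (by omega), if_neg (by omega)]

/-- The points of colour-type `a` and period `p`: those brought back to their position for the
first time by `g ^ p`, with colour increased by `a`. -/
def Zset (n p a : ℕ) (g : Equiv.Perm (ℕ × ZMod r)) : Set (ℕ × ZMod r) :=
  {z | z.1 < n ∧ (g ^ p) z = (z.1, z.2 + a) ∧ ∀ i, 0 < i → i < p → ((g ^ i) z).1 ≠ z.1}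

lemma isCyc_pow {g : Equiv.Perm (ℕ × ZMod r)} {s q b : ℕ} (hg : IsCyc g s q b)
    {j : ℕ} (hj : j < q) (e : ZMod r) (i : ℕ) :
    (g ^ i) (s + j, e) = (s + (j + i) % q, e + ((j + i) / q : ℕ) * b) := by
  induction i with
  | zero => simp [Nat.mod_eq_of_lt hj, Nat.div_eq_of_lt hj]
  | succ i ih =>
    have hlt := Nat.mod_lt (j + i) (show 0 < q by omega)
    rw [pow_succ', Equiv.Perm.mul_apply, ih, hg _ (by simp) (by simpa using hlt)]
    have hd := Nat.div_add_mod (j + i) q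
    split_ifs with h
    · simp only at h
      have hh : (j + (i + 1)) % q = (j + i) % q + 1 ∧ (j + (i + 1)) / q = (j + i) / q := by
        rw [and_comm, Nat.div_mod_unique (by omega)]
        exact ⟨by omega, by omega⟩
      rw [hh.1, hh.2, add_assoc]
    · simp only at h
      have hh : (j + (i + 1)) / q = (j + i) / q + 1 ∧ (j + (i + 1)) % q = 0 := by
        rw [Nat.div_mod_unique (by omega)]
        exact ⟨by rw [mul_add]; omega, by omega⟩
      rw [hh.1, hh.2]
      push_cast
      ext
      · simp
      · simp only; ring

lemma mem_Zset_of_isCyc {g : Equiv.Perm (ℕ × ZMod r)} {s q b p a : ℕ} (hg : IsCyc g s q b)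
    (hp : 1 ≤ p) (ha : a < r) (hb : b < r) {z : ℕ × ZMod r} (h1 : s ≤ z.1) (h2 : z.1 < s + q) :
    ((g ^ p) z = (z.1, z.2 + a) ∧ ∀ i, 0 < i → i < p → ((g ^ i) z).1 ≠ z.1) ↔
      (q, b) = (p, a) := by
  obtain ⟨x, e⟩ := z
  simp only at h1 h2
  obtain ⟨j, rfl⟩ : ∃ j, x = s + j := ⟨x - s, by omega⟩
  have hj : j < q := by omega
  have hpow := isCyc_pow hg hj e
  have hq : (g ^ q) (s + j, e) = (s + j, e + b) := by
    rw [hpow, Nat.add_mod_right, Nat.mod_eq_of_lt hj, Nat.add_div_right _ (by omega),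
      Nat.div_eq_of_lt hj]
    simp
  have hcast : ((b : ZMod r) = a) ↔ b = a := by
    rw [ZMod.natCast_eq_natCast_iff', Nat.mod_eq_of_lt ha, Nat.mod_eq_of_lt hb]
  have hne : ∀ i, 0 < i → i < q → ((g ^ i) (s + j, e)).1 ≠ s + j := by
    intro i hi hiq h
    rw [hpow] at h
    simp only at h
    have h3 : (j + i) % q = j := by omega
    rcases Nat.lt_or_ge (j + i) q with h4 | h4
    · rw [Nat.mod_eq_of_lt h4] at h3; omega
    · rw [Nat.mod_eq_sub_mod h4, Nat.mod_eq_of_lt (by omega)] at h3; omega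
  constructor
  · rintro ⟨h3, h4⟩
    have hpq : q = p := by
      rcases Nat.lt_trichotomy q p with h | h | h
      · exact absurd (by rw [hq]) (h4 q (by omega) h)
      · exact h
      · exact absurd (by rw [h3]) (hne p (by omega) h)
    subst hpq
    rw [hq] at h3
    have : b = a := by simpa [hcast] using h3
    rw [this]
  · rintro h
    obtain ⟨rfl, rfl⟩ := Prod.mk.inj h
    exact ⟨hq, hne⟩

lemma card_typ {L : List (ℕ × ℕ)} (k p a : ℕ) :
    ∑ x ∈ Finset.Ico k (k + tot L), (if typ k L x = (p, a) then 1 else 0)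
      = p * L.count (p, a) := by
  induction L generalizing k with
  | nil => simp [tot]
  | cons y L ih =>
    rw [tot_cons, ← Finset.sum_Ico_consecutive _ (show k ≤ k + y.1 by omega) (by omega)]
    have e1 : ∑ x ∈ Finset.Ico k (k + y.1), (if typ k (y :: L) x = (p, a) then 1 else 0)
        = y.1 * (if y = (p, a) then 1 else 0) := by
      rw [Finset.sum_congr rfl (g := fun _ => if y = (p, a) then 1 else 0)]
      · simp
      · intro x hx
        rw [Finset.mem_Ico] at hx
        rw [typ, if_pos hx.2]
    have e2 : ∑ x ∈ Finset.Ico (k + y.1) (k + (y.1 + tot L)),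
        (if typ k (y :: L) x = (p, a) then 1 else 0) = p * L.count (p, a) := by
      rw [← ih (k + y.1), ← add_assoc]
      refine Finset.sum_congr rfl fun x hx => ?_
      rw [Finset.mem_Ico] at hx
      have ht : typ k (y :: L) x = typ (k + y.1) L x := by rw [typ, if_neg (by omega)]
      rw [ht]
    rw [e1, e2, List.count_cons]
    by_cases hy : y = (p, a)
    · simp [hy]; ring
    · simp [hy]

/-- The number of points of period `p` and colour `a` counts the blocks of that type. -/
lemma ncard_Zset_bw (hr : 1 ≤ r) {L : List (ℕ × ℕ)} (hL : ∀ x ∈ L, 1 ≤ x.1 ∧ x.2 < r)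
    (ht : tot L = n) {p a : ℕ} (hp : 1 ≤ p) (ha : a < r) :
    (Zset n p a (bw (pgen r n) 0 L)).ncard = p * L.count (p, a) * r := by
  have : NeZero r := ⟨by omega⟩
  have : Zset n p a (bw (pgen r n) 0 L) =
      (((Finset.Ico 0 (0 + tot L)).filter fun x => typ 0 L x = (p, a)) ×ˢ
        (Finset.univ : Finset (ZMod r)) : Finset (ℕ × ZMod r)) := by
    ext z
    simp only [Zset, Set.mem_ofPred_eq, Finset.coe_product, Set.mem_prod, Finset.mem_coe,
      Finset.mem_filter, Finset.mem_Ico, Finset.mem_univ, and_true, zero_add, ht, zero_le,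
      true_and]
    refine and_congr_right fun hz => ?_
    obtain ⟨hm, s, -, hs2, hs3, hc⟩ := bw_isCyc (r := r) (n := n) (k := 0) (L := L) (x := z.1)
      (fun x hx => (hL x hx).1) (by omega) (by omega) (by omega)
    exact mem_Zset_of_isCyc hc hp ha (hL _ hm).2 hs2 hs3
  rw [this, Set.ncard_coe_finset, Finset.card_product, Finset.card_filter, card_typ,
    Finset.card_univ, ZMod.card]

/-- The permutations commuting with all translations of colours and preserving `{0, …, n-1}`. -/
def wreath (r n : ℕ) : Subgroup (Equiv.Perm (ℕ × ZMod r)) where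
  carrier := {h | ∀ z : ℕ × ZMod r, (∀ e, h (z.1, z.2 + e) = ((h z).1, (h z).2 + e)) ∧
    ((h z).1 < n ↔ z.1 < n)}
  one_mem' := fun z => by simp
  mul_mem' := by
    intro g h hg hh z
    refine ⟨fun e => ?_, ?_⟩
    · rw [Equiv.Perm.mul_apply, (hh z).1, (hg _).1]; rfl
    · rw [Equiv.Perm.mul_apply, (hg _).2, (hh _).2]
  inv_mem' := by
    intro h hh z
    refine ⟨fun e => ?_, ?_⟩
    · apply h.injective
      rw [(hh _).1]
      simp
    · rw [← (hh _).2]; simp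

lemma pgen_mem (hn : 1 ≤ n) (i : ℕ) : pgen r n i ∈ wreath r n := by
  rcases Nat.lt_or_ge i n with hi | hi
  · rcases i with _ | i
    · intro z
      simp only [pgen_zero hn, and_true]
      intro e
      by_cases h : z.1 = 0 <;> simp [h, add_right_comm]
    · intro z
      simp only [pgen_succ hi, implies_true, true_and]
      split_ifs <;> omega
  · rw [pgen, if_pos hi]; exact one_mem _

/-- Conjugation in the wreath product preserves the number of points of given period and colour. -/
lemma ncard_Zset_conj {g h : Equiv.Perm (ℕ × ZMod r)} (hh : h ∈ wreath r n) (p a : ℕ) :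
    (Zset n p a (h * g * h⁻¹)).ncard = (Zset n p a g).ncard := by
  have hpos : ∀ x y : ℕ × ZMod r, (h x).1 = (h y).1 ↔ x.1 = y.1 := by
    have key : ∀ f ∈ wreath r n, ∀ x y : ℕ × ZMod r, x.1 = y.1 → (f x).1 = (f y).1 := by
      intro f hf x y hxy
      have := (hf x).1 (y.2 - x.2)
      rw [add_sub_cancel, hxy] at this
      rw [show f y = f (y.1, y.2) from rfl, this]
    intro x y
    refine ⟨fun hxy => ?_, key h hh x y⟩
    simpa using key h⁻¹ (inv_mem hh) _ _ hxy
  have : Zset n p a (h * g * h⁻¹) = h '' Zset n p a g := by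
    ext z
    obtain ⟨z, rfl⟩ := h.surjective z
    rw [h.injective.mem_set_image]
    have hp : ∀ i, ((h * g * h⁻¹) ^ i) (h z) = h ((g ^ i) z) := fun i => by
      rw [conj_pow]; simp
    simp only [Zset, Set.mem_ofPred_eq, hp, (hh z).2, ← (hh z).1, h.injective.eq_iff, ne_eq, hpos]
  rw [this, Set.ncard_image_of_injective _ h.injective]

/-- The permutations `pgen` satisfy the defining relations of `W_n`. -/
lemma pgen_rels (hn : 1 ≤ n) : ∀ w ∈ rels r n, FreeGroup.lift (pgen r n) w = 1 := by
  have hext : ∀ f g : Equiv.Perm (ℕ × ZMod r), (∀ z, (f z).1 = (g z).1 ∧ (f z).2 = (g z).2) →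
      f = g := fun f g h => Equiv.ext fun z => Prod.ext (h z).1 (h z).2
  rintro w (rfl | ⟨i, h1, h2, rfl⟩ | ⟨h, rfl⟩ | ⟨i, h1, h2, rfl⟩ | ⟨i, h1, h2, rfl⟩ |
    ⟨i, j, h1, h2, h3, rfl⟩ | ⟨i, h1, rfl⟩) <;>
    simp only [map_mul, map_inv, map_pow, FreeGroup.lift_apply_of, mul_inv_eq_one] <;>
    apply hext <;> intro z <;> try simp only [Equiv.Perm.mul_apply]
  · rw [pgen_zero_pow hn]; simp
  · simp only [sq, Equiv.Perm.mul_apply, pgen_pos h1 h2, and_true, Equiv.Perm.one_apply]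
    split_ifs <;> omega
  · simp only [pgen_zero hn, pgen_pos le_rfl h]
    by_cases h0 : z.1 = 0
    · simp [h0]
    · by_cases h1 : z.1 = 1
      · simp [h1]
      · simp [h0, h1]
  · simp only [pgen_zero hn, pgen_pos (show 1 ≤ i by omega) h2, true_and]
    refine if_congr ?_ rfl rfl
    split_ifs <;> omega
  · simp only [pgen_pos h1 (show i < n by omega), pgen_succ h2, and_true]
    split_ifs <;> omega
  · simp only [pgen_pos h1 (show i < n by omega), pgen_pos (show 1 ≤ j by omega) h3, and_true]
    split_ifs <;> omega
  · rw [pgen, if_pos h1]; simp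

/-- The action of `W_n` on positions with colours. -/
def act (hn : 1 ≤ n) : W r n →* Equiv.Perm (ℕ × ZMod r) :=
  PresentedGroup.toGroup (pgen_rels hn)

lemma act_gen (hn : 1 ≤ n) (i : ℕ) : act hn (gen r n i) = pgen r n i :=
  PresentedGroup.toGroup.of _

lemma act_mem (hn : 1 ≤ n) (w : W r n) : act hn w ∈ wreath r n := by
  have : w ∈ Subgroup.closure (Set.range (PresentedGroup.of (rels := rels r n))) := by
    rw [PresentedGroup.closure_range_of]; trivial
  induction this using Subgroup.closure_induction with
  | mem x hx => obtain ⟨i, rfl⟩ := hx; exact (act_gen hn i).symm ▸ pgen_mem hn i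
  | one => rw [map_one]; exact one_mem _
  | mul x y _ _ hx hy => rw [map_mul]; exact mul_mem hx hy
  | inv x _ hx => rw [map_inv]; exact inv_mem hx

end Action

section Map

variable {M N : Type*} [Monoid M] [Monoid N] (ψ : M →* N)

lemma map_asc (g : ℕ → M) (a m : ℕ) : ψ (asc g a m) = asc (fun i => ψ (g i)) a m := by
  induction m with
  | zero => exact map_one ψ
  | succ m ih => rw [asc, map_mul, ih, asc]

lemma map_br (g : ℕ → M) (a k : ℕ) : ψ (br g a k) = br (fun i => ψ (g i)) a k := by
  induction k with
  | zero => exact map_pow ψ _ _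
  | succ k ih => rw [br, map_mul, map_mul, ih, br]

lemma map_bw (g : ℕ → M) (k : ℕ) (L : List (ℕ × ℕ)) :
    ψ (bw g k L) = bw (fun i => ψ (g i)) k L := by
  induction L generalizing k with
  | nil => exact map_one ψ
  | cons x L ih =>
    rw [bw, map_mul, ih, bw, blk, blk, map_mul, map_asc]
    split_ifs
    · rw [map_one]
    · rw [map_br]

end Map

/-- The conjugacy class of a product of blocks determines the blocks up to order. -/
theorem perm_of_isConj {r n : ℕ} (hr : 1 ≤ r) (hn : 1 ≤ n) {L L' : List (ℕ × ℕ)}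
    (hL : ∀ x ∈ L, 1 ≤ x.1 ∧ (x.2 = 0 ∨ x.2 < r)) (ht : tot L = n)
    (hL' : ∀ x ∈ L', 1 ≤ x.1 ∧ (x.2 = 0 ∨ x.2 < r)) (ht' : tot L' = n)
    (h : IsConj (bw (gen r n) 0 L) (bw (gen r n) 0 L')) : L.Perm L' := by
  have hlt : ∀ {L : List (ℕ × ℕ)}, (∀ x ∈ L, 1 ≤ x.1 ∧ (x.2 = 0 ∨ x.2 < r)) →
      ∀ x ∈ L, 1 ≤ x.1 ∧ x.2 < r := fun hL x hx => ⟨(hL x hx).1, by have := hL x hx; omega⟩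
  rw [List.perm_iff_count]
  rintro ⟨p, a⟩
  by_cases hpa : 1 ≤ p ∧ a < r
  · obtain ⟨w, hw⟩ := isConj_iff.1 h
    have h1 := congrArg (act hn) hw
    simp only [map_mul, map_inv, map_bw, act_gen] at h1
    have h2 := ncard_Zset_conj (g := bw (pgen r n) 0 L) (act_mem hn w) p a
    rw [h1] at h2
    erw [ncard_Zset_bw hr (hlt hL) ht hpa.1 hpa.2, ncard_Zset_bw hr (hlt hL') ht' hpa.1 hpa.2] at h2
    have h3 := Nat.eq_of_mul_eq_mul_right (by omega) h2
    exact (Nat.eq_of_mul_eq_mul_left (by omega) h3).symm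
  · rw [List.count_eq_zero_of_not_mem, List.count_eq_zero_of_not_mem]
    · exact fun hm => hpa (hlt hL' _ hm)
    · exact fun hm => hpa (hlt hL _ hm)

end CocenterSpan

/-! ### Words in the Hecke algebra and the conclusion -/

namespace CocenterSpan

open CRG CHA

section Hecke

variable {R : Type} [CommRing R] {r n : ℕ} {ξ : R} {Q : Fin r → R}

lemma Tn_of_lt {i : ℕ} (h : i < n) : Tn R r n ξ Q i = T R r n ξ Q ⟨i, h⟩ := dif_pos h

lemma Tn_of_ge {i : ℕ} (h : n ≤ i) : Tn R r n ξ Q i = 1 := dif_neg (by omega)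

lemma Tn_comm {i j : ℕ} (h : i + 2 ≤ j) : Commute (Tn R r n ξ Q i) (Tn R r n ξ Q j) := by
  rcases Nat.lt_or_ge j n with hj | hj
  · have hrel : rel R r n ξ Q _ _ := Or.inr (Or.inr (Or.inr (Or.inl
      ⟨i, j, by omega, hj, by omega, rfl, rfl⟩)))
    have := RingQuot.mkAlgHom_rel R hrel
    rw [map_mul, map_mul] at this
    rw [Tn_of_lt hj, Tn_of_lt (show i < n by omega)]
    exact this
  · rw [Tn_of_ge hj]; exact Commute.one_right _

lemma Tn_braid {i : ℕ} (h1 : 1 ≤ i) (h : i + 1 < n) :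
    Tn R r n ξ Q i * Tn R r n ξ Q (i + 1) * Tn R r n ξ Q i
      = Tn R r n ξ Q (i + 1) * Tn R r n ξ Q i * Tn R r n ξ Q (i + 1) := by
  have hrel : rel R r n ξ Q _ _ := Or.inr (Or.inr (Or.inr (Or.inr ⟨i, h, h1, rfl, rfl⟩)))
  have := RingQuot.mkAlgHom_rel R hrel
  simp only [map_mul] at this
  rw [Tn_of_lt h, Tn_of_lt (show i < n by omega)]
  exact this

lemma Tn_braid_zero (h : 1 < n) :
    Tn R r n ξ Q 0 * Tn R r n ξ Q 1 * Tn R r n ξ Q 0 * Tn R r n ξ Q 1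
      = Tn R r n ξ Q 1 * Tn R r n ξ Q 0 * Tn R r n ξ Q 1 * Tn R r n ξ Q 0 := by
  have hrel : rel R r n ξ Q _ _ := Or.inr (Or.inl ⟨by omega, h, rfl, rfl⟩)
  have := RingQuot.mkAlgHom_rel R hrel
  simp only [map_mul] at this
  rw [Tn_of_lt h, Tn_of_lt (show 0 < n by omega)]
  exact this

lemma quad_aux {A : Type*} [Ring A] [Algebra R A] {s : A}
    (h : (s - algebraMap R A ξ) * (s + 1) = 0) : s * s = (ξ - 1) • s + ξ • 1 := by
  rw [Algebra.algebraMap_eq_smul_one] at h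
  rw [sub_smul, one_smul, ← sub_eq_zero, ← h]
  simp only [sub_mul, mul_add, smul_mul_assoc, one_mul, mul_one]
  abel

lemma quad_aux' {A : Type*} [Ring A] [Algebra R A] {s : A} (h : s * s = (ξ - 1) • s + ξ • 1) :
    s * (s + (1 - ξ) • 1) = ξ • 1 ∧ (s + (1 - ξ) • 1) * s = ξ • 1 := by
  rw [mul_add, add_mul, h]
  simp only [mul_smul_comm, smul_mul_assoc, mul_one, one_mul]
  simp only [sub_smul, one_smul]
  constructor <;> abel

lemma Tn_quad {i : ℕ} (h1 : 1 ≤ i) (h : i < n) :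
    Tn R r n ξ Q i * Tn R r n ξ Q i = (ξ - 1) • Tn R r n ξ Q i + ξ • 1 := by
  have hrel : rel R r n ξ Q _ _ := Or.inr (Or.inr (Or.inl ⟨i, h, h1, rfl, rfl⟩))
  have := RingQuot.mkAlgHom_rel R hrel
  simp only [map_mul, map_sub, map_add, map_one, map_zero, AlgHom.commutes] at this
  rw [Tn_of_lt h]
  exact quad_aux this

lemma Tn_cyclotomic (h : 1 ≤ n) : ((List.ofFn Q).map fun q => Tn R r n ξ Q 0 -
    algebraMap R (Alg R r n ξ Q) q).prod = 0 := by
  have hrel : rel R r n ξ Q _ _ := Or.inl ⟨h, rfl, rfl⟩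
  have := RingQuot.mkAlgHom_rel R hrel
  rw [map_zero, map_list_prod, List.map_ofFn] at this
  rw [List.map_ofFn, Tn_of_lt (show 0 < n by omega), ← this]
  congr 2
  funext i
  simp [T]

lemma gen_of_ge {i : ℕ} (h : n ≤ i) : gen r n i = 1 :=
  PresentedGroup.one_of_mem (rels := rels r n) (x := FreeGroup.of i)
    (Or.inr (Or.inr (Or.inr (Or.inr (Or.inr (Or.inr ⟨i, h, rfl⟩))))))

lemma gen_comm {i j : ℕ} (h : i + 2 ≤ j) : Commute (gen r n i) (gen r n j) := by
  rcases Nat.lt_or_ge j n with hj | hj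
  · have key : FreeGroup.of i * FreeGroup.of j * (FreeGroup.of j * FreeGroup.of i)⁻¹ ∈
        rels r n := by
      rcases Nat.eq_zero_or_pos i with rfl | hi
      · exact Or.inr (Or.inr (Or.inr (Or.inl ⟨j, by omega, hj, rfl⟩)))
      · exact Or.inr (Or.inr (Or.inr (Or.inr (Or.inr (Or.inl ⟨i, j, hi, by omega, hj, rfl⟩)))))
    have := PresentedGroup.one_of_mem key
    rw [map_mul, map_inv, mul_inv_eq_one, map_mul, map_mul] at this
    exact this
  · rw [gen_of_ge hj]; exact Commute.one_right _

lemma gen_braid {i : ℕ} (h1 : 1 ≤ i) (h : i + 1 < n) :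
    gen r n i * gen r n (i + 1) * gen r n i
      = gen r n (i + 1) * gen r n i * gen r n (i + 1) := by
  have := PresentedGroup.one_of_mem (rels := rels r n)
    (Or.inr (Or.inr (Or.inr (Or.inr (Or.inl ⟨i, h1, h, rfl⟩)))))
  rw [map_mul, map_inv, mul_inv_eq_one] at this
  simp only [map_mul] at this
  exact this

lemma gen_braid_zero (h : 1 < n) :
    gen r n 0 * gen r n 1 * gen r n 0 * gen r n 1
      = gen r n 1 * gen r n 0 * gen r n 1 * gen r n 0 := by
  have := PresentedGroup.one_of_mem (rels := rels r n) (Or.inr (Or.inr (Or.inl ⟨h, rfl⟩)))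
  rw [map_mul, map_inv, mul_inv_eq_one] at this
  simp only [map_mul] at this
  exact this

lemma gen_sq {i : ℕ} (h1 : 1 ≤ i) (h : i < n) : gen r n i * gen r n i = 1 := by
  have := PresentedGroup.one_of_mem (rels := rels r n) (Or.inr (Or.inl ⟨i, h1, h, rfl⟩))
  rw [map_pow, sq] at this
  exact this

lemma gen_zero_pow : gen r n 0 ^ r = 1 := by
  have := PresentedGroup.one_of_mem (rels := rels r n) (Or.inl rfl)
  rw [map_pow] at this
  exact this

lemma gen_tcomm (h : 1 < n) (a : ℕ) : gen r n 0 * (gen r n 1 * gen r n 0 ^ a * gen r n 1)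
    = gen r n 1 * gen r n 0 ^ a * gen r n 1 * gen r n 0 := by
  have hs := gen_sq (r := r) le_rfl h
  have hinv : (gen r n 1)⁻¹ = gen r n 1 := inv_eq_of_mul_eq_one_left hs
  have hc : Commute (gen r n 0) (gen r n 1 * gen r n 0 * gen r n 1) := by
    have := gen_braid_zero (r := r) h
    simpa only [Commute, SemiconjBy, mul_assoc] using this
  have hp := hc.pow_right a
  have e : (gen r n 1 * gen r n 0 * gen r n 1) ^ a = gen r n 1 * gen r n 0 ^ a * gen r n 1 := by
    have := conj_pow (a := gen r n 1) (b := gen r n 0) (i := a)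
    rwa [hinv] at this
  rw [e] at hp
  exact hp.eq

variable (R r n ξ Q)

/-- The submodule of the Hecke algebra spanned by the words of length `< k`. -/
def F (k : ℕ) : Submodule R (Alg R r n ξ Q) :=
  Submodule.span R {h | ∃ l : List ℕ, l.length < k ∧ h = Tw R r n ξ Q l}

/-- The words of length `< k` together with all commutators. -/
def G (k : ℕ) : Submodule R (Alg R r n ξ Q) :=
  F R r n ξ Q k ⊔ commutatorSubmodule R (Alg R r n ξ Q)

/-- Evaluation of a word in the Hecke algebra and in the group, together with its length. -/
def ev : FreeMonoid ℕ →* Alg R r n ξ Q × W r n × Multiplicative ℕ :=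
  FreeMonoid.lift fun i => (Tn R r n ξ Q i, gen r n i, Multiplicative.ofAdd 1)

/-- The monoid of all evaluations of words. -/
abbrev WM : Type := MonoidHom.mrange (ev R r n ξ Q)

variable {R r n ξ Q}

lemma Tw_append (l l' : List ℕ) :
    Tw R r n ξ Q (l ++ l') = Tw R r n ξ Q l * Tw R r n ξ Q l' := by
  simp [Tw]

lemma wprod_append (l l' : List ℕ) : wprod r n (l ++ l') = wprod r n l * wprod r n l' := by
  simp [wprod]

lemma ev_ofList (l : List ℕ) : ev R r n ξ Q (FreeMonoid.ofList l) =
    (Tw R r n ξ Q l, wprod r n l, Multiplicative.ofAdd l.length) := by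
  induction l with
  | nil => exact map_one _
  | cons i l ih =>
    rw [FreeMonoid.ofList_cons, map_mul, ih, ev, FreeMonoid.lift_eval_of, Prod.mk_mul_mk,
      Prod.mk_mul_mk, ← ofAdd_add]
    simp [Tw, wprod, add_comm]

/-- The value in the Hecke algebra. -/
def hv : WM R r n ξ Q →* Alg R r n ξ Q := (MonoidHom.fst _ _).comp (Submonoid.subtype _)

/-- The value in the reflection group. -/
def wv : WM R r n ξ Q →* W r n :=
  (MonoidHom.fst _ _).comp ((MonoidHom.snd _ _).comp (Submonoid.subtype _))

/-- The length of the word. -/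
def lv : WM R r n ξ Q →* Multiplicative ℕ :=
  (MonoidHom.snd _ _).comp ((MonoidHom.snd _ _).comp (Submonoid.subtype _))

/-- The evaluation of a list of letters. -/
def wd (l : List ℕ) : WM R r n ξ Q := ⟨ev R r n ξ Q (FreeMonoid.ofList l), ⟨_, rfl⟩⟩

/-- The length, as a natural number. -/
def len (x : WM R r n ξ Q) : ℕ := (lv x).toAdd

lemma len_mul (x y : WM R r n ξ Q) : len (x * y) = len x + len y := by
  simp [len]

lemma hv_wd (l : List ℕ) : hv (wd l : WM R r n ξ Q) = Tw R r n ξ Q l := by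
  simp [hv, wd, ev_ofList]

lemma wv_wd (l : List ℕ) : wv (wd l : WM R r n ξ Q) = wprod r n l := by
  simp [wv, wd, ev_ofList]

lemma len_wd (l : List ℕ) : len (wd l : WM R r n ξ Q) = l.length := by
  simp [len, lv, wd, ev_ofList]

lemma exists_wd (x : WM R r n ξ Q) : ∃ l, x = wd l := by
  obtain ⟨x, y, rfl⟩ := x
  exact ⟨FreeMonoid.toList y, rfl⟩

lemma WM_ext {x y : WM R r n ξ Q} (h1 : hv x = hv y) (h2 : wv x = wv y) (h3 : len x = len y) :
    x = y := Subtype.ext (Prod.ext h1 (Prod.ext h2 h3))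

/-- The letters. -/
def wg (i : ℕ) : WM R r n ξ Q := wd [i]

lemma hv_wg (i : ℕ) : hv (wg i : WM R r n ξ Q) = Tn R r n ξ Q i := by simp [wg, hv_wd, Tw]

lemma wv_wg (i : ℕ) : wv (wg i : WM R r n ξ Q) = gen r n i := by simp [wg, wv_wd, wprod]

lemma len_wg (i : ℕ) : len (wg i : WM R r n ξ Q) = 1 := by simp [wg, len_wd]

lemma len_pow (x : WM R r n ξ Q) (a : ℕ) : len (x ^ a) = a * len x := by
  simp [len]

lemma wd_mul (l l' : List ℕ) : (wd l * wd l' : WM R r n ξ Q) = wd (l ++ l') :=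
  WM_ext (by rw [map_mul, hv_wd, hv_wd, hv_wd, Tw_append])
    (by rw [map_mul, wv_wd, wv_wd, wv_wd, wprod_append]) (by simp [len_mul, len_wd])

lemma F_mono {k k' : ℕ} (h : k ≤ k') : F R r n ξ Q k ≤ F R r n ξ Q k' :=
  Submodule.span_mono fun _ ⟨l, hl, e⟩ => ⟨l, by omega, e⟩

lemma hv_mem_F {x : WM R r n ξ Q} {k : ℕ} (h : len x < k) : hv x ∈ F R r n ξ Q k := by
  obtain ⟨l, rfl⟩ := exists_wd x
  exact Submodule.subset_span ⟨l, by rwa [len_wd] at h, hv_wd l⟩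

/-- Multiplying by words raises the length filtration by at most their lengths. -/
lemma F_context (u v : WM R r n ξ Q) {k : ℕ} {h : Alg R r n ξ Q} (hh : h ∈ F R r n ξ Q k) :
    hv u * h * hv v ∈ F R r n ξ Q (len u + k + len v) := by
  induction hh using Submodule.span_induction with
  | mem x hx =>
    obtain ⟨l, hl, rfl⟩ := hx
    rw [← hv_wd, ← map_mul, ← map_mul]
    exact hv_mem_F (by simp only [len_mul, len_wd]; omega)
  | zero => simp
  | add x y _ _ hx hy => rw [mul_add, add_mul]; exact add_mem hx hy
  | smul a x _ hx =>
    rw [mul_smul_comm, smul_mul_assoc]; exact Submodule.smul_mem _ _ hx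

lemma F_le_G (k : ℕ) : F R r n ξ Q k ≤ G R r n ξ Q k := le_sup_left

lemma comm_mem_G (a b : Alg R r n ξ Q) (k : ℕ) : a * b - b * a ∈ G R r n ξ Q k :=
  le_sup_right (a := F R r n ξ Q k) (Submodule.subset_span ⟨a, b, rfl⟩)

/-- The quadratic relation in the form `s * (s + 1 - ξ) = ξ`. -/
lemma Tn_mul_u {i : ℕ} (h1 : 1 ≤ i) (h : i < n) :
    Tn R r n ξ Q i * (Tn R r n ξ Q i + (1 - ξ) • 1) = ξ • 1 ∧
      (Tn R r n ξ Q i + (1 - ξ) • 1) * Tn R r n ξ Q i = ξ • 1 :=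
  quad_aux' (Tn_quad h1 h)

lemma Tn_isUnit (hξ : IsUnit ξ) {i : ℕ} (h1 : 1 ≤ i) (h : i < n) :
    IsUnit (Tn R r n ξ Q i) := by
  obtain ⟨x, rfl⟩ := hξ
  obtain ⟨e1, e2⟩ := Tn_mul_u (Q := Q) (ξ := (x : R)) h1 h
  refine ⟨⟨Tn R r n (x : R) Q i, (↑x⁻¹ : R) • (Tn R r n (x : R) Q i + (1 - (x : R)) • 1), ?_, ?_⟩, rfl⟩
  · rw [mul_smul_comm, e1, smul_smul, Units.inv_mul, one_smul]
  · rw [smul_mul_assoc, e2, smul_smul, Units.inv_mul, one_smul]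

/-- The failure of `t` to commute with `s_1 t^a s_1`. -/
lemma Tn_tcomm (hξ : IsUnit ξ) (h : 1 < n) (a : ℕ) :
    Tn R r n ξ Q 0 * (Tn R r n ξ Q 1 * Tn R r n ξ Q 0 ^ a * Tn R r n ξ Q 1)
      - Tn R r n ξ Q 1 * Tn R r n ξ Q 0 ^ a * Tn R r n ξ Q 1 * Tn R r n ξ Q 0
      = (1 - ξ) • (Tn R r n ξ Q 0 ^ a * Tn R r n ξ Q 1 * Tn R r n ξ Q 0)
        - (1 - ξ) • (Tn R r n ξ Q 0 * Tn R r n ξ Q 1 * Tn R r n ξ Q 0 ^ a) := by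
  obtain ⟨e1, e2⟩ := Tn_mul_u (Q := Q) (ξ := ξ) le_rfl h
  have hb := Tn_braid_zero (R := R) (r := r) (ξ := ξ) (Q := Q) h
  set t := Tn R r n ξ Q 0
  set s := Tn R r n ξ Q 1
  set u := s + (1 - ξ) • (1 : Alg R r n ξ Q) with hu
  have hc : Commute t (s * t * s) := by
    simpa only [Commute, SemiconjBy, mul_assoc] using hb
  have hp := (hc.pow_left a).eq
  have h1 : ξ • (u * t ^ a * s * t) = ξ • (t * s * t ^ a * u) := by
    calc _ = u * (t ^ a * (s * t * s)) * u := by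
          simp only [mul_assoc, e1, mul_smul_comm, mul_one]
      _ = (u * s) * t * s * t ^ a * u := by rw [hp]; simp only [mul_assoc]
      _ = _ := by rw [e2]; simp only [smul_mul_assoc, one_mul]
  have h2 : u * t ^ a * s * t = t * s * t ^ a * u := hξ.smul_left_cancel.1 h1
  simp only [hu, add_mul, mul_add, smul_mul_assoc, mul_smul_comm, mul_one, one_mul] at h2
  rw [sub_eq_sub_iff_add_eq_add, add_comm ((1 - ξ) • _), ← mul_assoc, ← mul_assoc]
  exact h2.symm

/-- By the cyclotomic relation, `T_0 ^ r` is a combination of lower powers of `T_0`. -/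
lemma T_zero_pow_mem (hn : 1 ≤ n) : Tn R r n ξ Q 0 ^ r ∈ F R r n ξ Q r := by
  have key : ∀ qs : List R, (qs.map fun q => Tn R r n ξ Q 0 -
      algebraMap R (Alg R r n ξ Q) q).prod - Tn R r n ξ Q 0 ^ qs.length ∈
        F R r n ξ Q qs.length := by
    intro qs
    induction qs with
    | nil => simp
    | cons q qs ih =>
      rw [List.map_cons, List.prod_cons, List.length_cons, pow_succ']
      set p := (qs.map fun q => Tn R r n ξ Q 0 - algebraMap R (Alg R r n ξ Q) q).prod
      set t := Tn R r n ξ Q 0 with ht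
      have e : (t - algebraMap R (Alg R r n ξ Q) q) * p - t * t ^ qs.length
          = t * (p - t ^ qs.length) - q • (p - t ^ qs.length) - q • t ^ qs.length := by
        rw [Algebra.algebraMap_eq_smul_one, sub_mul, smul_mul_assoc, one_mul, mul_sub, smul_sub]
        abel
      rw [e]
      refine sub_mem (sub_mem ?_ (Submodule.smul_mem _ _ (F_mono (by omega) ih)))
        (Submodule.smul_mem _ _ ?_)
      · have := F_context (wg 0) 1 ih
        rw [map_one, mul_one, hv_wg, len_wg] at this
        exact F_mono (by simp [len]; omega) this
      · rw [ht, ← hv_wg, ← map_pow]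
        exact hv_mem_F (by rw [len_pow, len_wg]; omega)
  have := key (List.ofFn Q)
  rw [Tn_cyclotomic hn, zero_sub, neg_mem_iff, List.length_ofFn] at this
  exact this

variable (R r n ξ Q)

/-- The abstract setting realised by words evaluated in the Hecke algebra and in `W_n`. -/
def ctx (hr : 1 ≤ r) (hn : 1 ≤ n) (hξ : IsUnit ξ) : Ctx (WM R r n ξ Q) r n where
  g := wg
  E x y := len x = len y ∧ IsConj (wv x) (wv y) ∧ hv x - hv y ∈ G R r n ξ Q (len x)
  D x := (∃ l : List ℕ, l.length < len x ∧ IsConj (wprod r n l) (wv x)) ∧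
    hv x ∈ G R r n ξ Q (len x)
  comm i j h := WM_ext (by simpa only [map_mul, hv_wg] using (Tn_comm h).eq)
    (by simpa only [map_mul, wv_wg] using (gen_comm h).eq) (by simp only [len_mul, len_wg])
  braid i h1 h := WM_ext (by simpa only [map_mul, hv_wg] using Tn_braid h1 h)
    (by simpa only [map_mul, wv_wg] using gen_braid h1 h) (by simp only [len_mul, len_wg])
  refl x := ⟨rfl, IsConj.refl _, by simp⟩
  symm := by
    rintro x y ⟨h1, h2, h3⟩
    refine ⟨h1.symm, h2.symm, ?_⟩
    rw [← h1, ← neg_sub]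
    exact neg_mem h3
  trans := by
    rintro x y z ⟨h1, h2, h3⟩ ⟨h1', h2', h3'⟩
    refine ⟨h1.trans h1', h2.trans h2', ?_⟩
    rw [← h1] at h3'
    simpa using add_mem h3 h3'
  cyc x y := by
    refine ⟨by rw [len_mul, len_mul, add_comm], ?_, ?_⟩
    · rw [isConj_iff]
      exact ⟨(wv x)⁻¹, by simp only [map_mul]; group⟩
    · rw [map_mul, map_mul]
      exact comm_mem_G _ _ _
  conj z x y hz h := by
    have hu : IsUnit (hv z) := by
      clear h
      induction hz using Submonoid.closure_induction with
      | mem x hx => obtain ⟨i, h1, h2, rfl⟩ := hx; rw [hv_wg]; exact Tn_isUnit hξ h1 h2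
      | one => rw [map_one]; exact isUnit_one
      | mul x y _ _ hx hy => rw [map_mul]; exact hx.mul hy
    have hl := congrArg len h
    rw [len_mul, len_mul] at hl
    have hw := congrArg wv h
    rw [map_mul, map_mul] at hw
    have hh := congrArg hv h
    rw [map_mul, map_mul] at hh
    refine ⟨by omega, ?_, ?_⟩
    · rw [isConj_iff]
      exact ⟨wv z, by rw [hw]; group⟩
    · obtain ⟨c, hc⟩ := hu
      rw [← hc] at hh
      have e1 : hv x = ↑c⁻¹ * (hv y * c) := by rw [← hh, Units.inv_mul_cancel_left]
      have e2 : hv y = (hv y * c) * ↑c⁻¹ := by rw [Units.mul_inv_cancel_right]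
      rw [e1]
      nth_rewrite 2 [e2]
      exact comm_mem_G _ _ _
  tcomm h a u v := by
    refine ⟨by simp only [len_mul]; omega, ?_, ?_⟩
    · have := gen_tcomm (r := r) h a
      simp only [map_mul, map_pow, wv_wg, this]
      exact IsConj.refl _
    · refine F_le_G _ ?_
      have hm : hv (wg 0 * (wg 1 * wg 0 ^ a * wg 1) : WM R r n ξ Q) -
          hv (wg 1 * wg 0 ^ a * wg 1 * wg 0 : WM R r n ξ Q) ∈ F R r n ξ Q (a + 3) := by
        have := Tn_tcomm (Q := Q) hξ h a
        simp only [← hv_wg, ← map_mul, ← map_pow] at this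
        rw [this]
        refine sub_mem (Submodule.smul_mem _ _ (hv_mem_F ?_))
          (Submodule.smul_mem _ _ (hv_mem_F ?_)) <;> simp only [len_mul, len_pow, len_wg] <;> omega
      have := F_context u v hm
      rw [mul_sub, sub_mul] at this
      simp only [← map_mul] at this
      refine F_mono ?_ this
      simp only [len_mul, len_pow, len_wg]; omega
  D_of_E := by
    rintro x y ⟨h1, h2, h3⟩ ⟨⟨l, hl, hc⟩, hd⟩
    refine ⟨⟨l, by omega, hc.trans h2.symm⟩, ?_⟩
    rw [← h1] at hd
    simpa using add_mem h3 hd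
  D_sq i h1 h u v := by
    constructor
    · obtain ⟨l, rfl⟩ := exists_wd u
      obtain ⟨l', rfl⟩ := exists_wd v
      refine ⟨l ++ l', by simp [len_mul, len_wd, len_wg], ?_⟩
      simp only [map_mul, wv_wg, gen_sq h1 h, wv_wd, wprod_append, mul_one]
      exact IsConj.refl _
    · refine F_le_G _ ?_
      have hm : hv (wg i * wg i : WM R r n ξ Q) ∈ F R r n ξ Q 2 := by
        rw [map_mul, hv_wg, Tn_quad h1 h, ← hv_wg, ← map_one hv]
        refine add_mem (Submodule.smul_mem _ _ (hv_mem_F ?_))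
          (Submodule.smul_mem _ _ (hv_mem_F ?_))
        · rw [len_wg]; omega
        · simp [len]
      have := F_context u v hm
      simp only [← map_mul] at this
      refine F_mono ?_ this
      simp only [len_mul, len_wg]; omega
  D_t u v := by
    constructor
    · obtain ⟨l, rfl⟩ := exists_wd u
      obtain ⟨l', rfl⟩ := exists_wd v
      refine ⟨l ++ l', ?_, ?_⟩
      · simp only [len_mul, len_wd, len_pow, len_wg, List.length_append]; omega
      simp only [map_mul, map_pow, wv_wg, gen_zero_pow, wv_wd, wprod_append, mul_one]
      exact IsConj.refl _
    · refine F_le_G _ ?_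
      have hm : hv (wg 0 ^ r : WM R r n ξ Q) ∈ F R r n ξ Q r := by
        rw [map_pow, hv_wg]; exact T_zero_pow_mem hn
      have := F_context u v hm
      simp only [← map_mul] at this
      refine F_mono ?_ this
      simp only [len_mul, len_pow, len_wg]; omega

variable {R r n ξ Q}

lemma wd_mem (hr : 1 ≤ r) (hn : 1 ≤ n) (hξ : IsUnit ξ) {l : List ℕ} (hl : ∀ m ∈ l, m < n) :
    wd l ∈ (ctx R r n ξ Q hr hn hξ).P n := by
  induction l with
  | nil => exact one_mem _
  | cons i l ih =>
    have : (wd (i :: l) : WM R r n ξ Q) = wg i * wd l := by rw [wg, wd_mul]; rfl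
    rw [this]
    exact mul_mem (Submonoid.subset_closure ⟨i, hl i (by simp), rfl⟩)
      (ih fun m hm => hl m (by simp [hm]))

lemma Tw_filter (l : List ℕ) :
    Tw R r n ξ Q (l.filter (· < n)) = Tw R r n ξ Q l := by
  induction l with
  | nil => rfl
  | cons i l ih =>
    by_cases hi : i < n
    · simp only [List.filter_cons, hi, decide_true, if_true]
      simpa [Tw] using congrArg (Tn R r n ξ Q i * ·) ih
    · have h1 : Tw R r n ξ Q (i :: l) = Tw R r n ξ Q l := by
        simp [Tw, Tn_of_ge (show n ≤ i by omega)]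
      rw [h1, ← ih]
      simp [hi]

lemma wprod_filter (l : List ℕ) : wprod r n (l.filter (· < n)) = wprod r n l := by
  induction l with
  | nil => rfl
  | cons i l ih =>
    by_cases hi : i < n
    · simp only [List.filter_cons, hi, decide_true, if_true]
      simpa [wprod] using congrArg (gen r n i * ·) ih
    · have h1 : wprod r n (i :: l) = wprod r n l := by
        simp [wprod, gen_of_ge (show n ≤ i by omega)]
      rw [h1, ← ih]
      simp [hi]

lemma ell_le (l : List ℕ) : ell r n (wprod r n l) ≤ l.length := by
  have : ell r n (wprod r n l) ≤ (l.filter (· < n)).length :=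
    Nat.sInf_le ⟨_, fun m hm => by simpa using (List.mem_filter.1 hm).2, rfl, wprod_filter l⟩
  exact this.trans (List.length_filter_le _ _)

/-- The words span the Hecke algebra. -/
lemma span_Tw : Submodule.span R (Set.range (Tw R r n ξ Q)) = ⊤ := by
  have h1 : Algebra.adjoin R (Set.range (T R r n ξ Q)) = ⊤ := by
    have h2 : Set.range (T R r n ξ Q) =
        RingQuot.mkAlgHom R (rel R r n ξ Q) '' Set.range (FreeAlgebra.ι R) := by
      rw [← Set.range_comp]; rfl
    rw [h2, ← AlgHom.map_adjoin, FreeAlgebra.adjoin_range_ι, Algebra.map_top,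
      AlgHom.range_eq_top]
    exact RingQuot.mkAlgHom_surjective R _
  have h3 := Algebra.adjoin_eq_span R (Set.range (T R r n ξ Q))
  rw [h1, Algebra.top_toSubmodule] at h3
  rw [eq_top_iff, h3]
  refine Submodule.span_mono fun x hx => ?_
  induction hx using Submonoid.closure_induction with
  | mem x hx =>
    obtain ⟨i, rfl⟩ := hx
    exact ⟨[i], by simp [Tw, Tn]⟩
  | one => exact ⟨[], rfl⟩
  | mul x y _ _ hx hy =>
    obtain ⟨l, rfl⟩ := hx
    obtain ⟨l', rfl⟩ := hy
    exact ⟨_, Tw_append l _⟩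

/-- A submodule containing the commutators and the chosen minimal elements contains every word, by
induction on the length: a reducible word is a combination of shorter ones, and any other word has
the same sorted block form as the chosen element of its class. -/
lemma Tw_mem (hr : 1 ≤ r) (hn : 1 ≤ n) (hξ : IsUnit ξ)
    {wC : ConjClasses (W r n) → List ℕ} (hrange : ∀ C, ∀ m ∈ wC C, m < n)
    (hmem : ∀ C, ConjClasses.mk (wprod r n (wC C)) = C)
    (hmin : ∀ C, ∀ u : W r n, ConjClasses.mk u = C →
      ell r n (wprod r n (wC C)) ≤ ell r n u)
    (hred : ∀ C, (wC C).length = ell r n (wprod r n (wC C)))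
    {U : Submodule R (Alg R r n ξ Q)} (hU : commutatorSubmodule R (Alg R r n ξ Q) ≤ U)
    (hC : ∀ C, Tw R r n ξ Q (wC C) ∈ U) (l : List ℕ) : Tw R r n ξ Q l ∈ U := by
  induction hk : l.length using Nat.strong_induction_on generalizing l with
  | _ k ih =>
    by_cases hl : ∀ m ∈ l, m < n
    swap
    -- letters outside the range act as the identity and can be dropped
    · rw [← Tw_filter]
      refine ih _ ?_ _ rfl
      rw [← hk]
      push Not at hl
      obtain ⟨m, hm, hmn⟩ := hl
      exact List.length_filter_lt_length_iff_exists.2 ⟨m, hm, by simpa using hmn⟩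
    have hG : G R r n ξ Q k ≤ U := by
      refine sup_le (Submodule.span_le.2 ?_) hU
      rintro _ ⟨l', hl', rfl⟩
      exact ih _ hl' _ rfl
    set c := ctx R r n ξ Q hr hn hξ
    rcases Ctx.exists_sorted (wd_mem (Q := Q) hr hn hξ hl) with hD | ⟨L, hL, ht, hs, hE⟩
    · have := hD.2
      rw [len_wd, hv_wd, hk] at this
      exact hG this
    set C := ConjClasses.mk (wprod r n l) with hCdef
    rcases Ctx.exists_sorted (wd_mem (Q := Q) hr hn hξ (hrange C)) with hD | ⟨L', hL', ht', hs', hE'⟩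
    -- a word of minimal length in its class is not reducible
    · obtain ⟨l', hl', hc⟩ := hD.1
      rw [len_wd] at hl'
      rw [wv_wd] at hc
      have h1 := hmin C (wprod r n l') ((ConjClasses.mk_eq_mk_iff_isConj.2 hc).trans (hmem C))
      have h2 := ell_le (r := r) (n := n) l'
      have h3 := hred C
      omega
    have hconj : IsConj (bw (gen r n) 0 L) (bw (gen r n) 0 L') := by
      have h1 := hE.2.1
      have h2 := hE'.2.1
      rw [map_bw, wv_wd] at h1 h2
      have e : (fun i => wv (c.g i)) = gen r n := funext fun i => wv_wg i
      rw [e] at h1 h2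
      have h3 : IsConj (wprod r n l) (wprod r n (wC C)) :=
        ConjClasses.mk_eq_mk_iff_isConj.1 (hmem C).symm
      exact h1.symm.trans (h3.trans h2)
    obtain rfl := Ctx.eq_of_sorted_perm (perm_of_isConj hr hn hL ht hL' ht' hconj) hs hs'
    have hfin := (c.trans hE (c.symm hE')).2.2
    rw [len_wd, hv_wd, hv_wd, hk] at hfin
    simpa using add_mem (hG hfin) (hC C)

end Hecke

end CocenterSpan

open CRG CHA in
/-- Over any commutative unital ring `R`, with `ξ ∈ R^×` and
`Q_1, …, Q_r ∈ R`, the images of the elements `T_{w_C}` (for any choice of minimal length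
representatives `w_C ∈ C_min` with fixed reduced expressions) span the cocenter
`Tr(H_{n,R}) = H_{n,R} ⧸ [H_{n,R}, H_{n,R}]` as an `R`-module. -/
theorem cocenter_spanned_by_minimal_conjugacy_representatives
    (r n : ℕ) (hr : 1 ≤ r) (hn : 1 ≤ n)
    (R : Type) [CommRing R] (ξ : R) (hξ : IsUnit ξ) (Q : Fin r → R)
    (wC : ConjClasses (W r n) → List ℕ)
    (hrange : ∀ C, ∀ m ∈ wC C, m < n)
    (hmem : ∀ C, ConjClasses.mk (wprod r n (wC C)) = C)
    (hmin : ∀ C, ∀ u : W r n, ConjClasses.mk u = C →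
      ell r n (wprod r n (wC C)) ≤ ell r n u)
    (hred : ∀ C, (wC C).length = ell r n (wprod r n (wC C))) :
    Submodule.span R
      (Set.range (fun C : ConjClasses (W r n) =>
        (Submodule.Quotient.mk (Tw R r n ξ Q (wC C)) :
          Alg R r n ξ Q ⧸ commutatorSubmodule R (Alg R r n ξ Q)))) = ⊤ := by
  set V := Submodule.span R
      (Set.range (fun C : ConjClasses (W r n) =>
        (Submodule.Quotient.mk (Tw R r n ξ Q (wC C)) :
          Alg R r n ξ Q ⧸ commutatorSubmodule R (Alg R r n ξ Q)))) with hV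
  have hU : (⊤ : Submodule R (Alg R r n ξ Q)) ≤
      V.comap (commutatorSubmodule R (Alg R r n ξ Q)).mkQ := by
    rw [← CocenterSpan.span_Tw, Submodule.span_le]
    rintro _ ⟨l, rfl⟩
    refine CocenterSpan.Tw_mem hr hn hξ hrange hmem hmin hred (fun x hx => ?_) (fun C => ?_) l
    · rw [Submodule.mem_comap, Submodule.mkQ_apply, (Submodule.Quotient.mk_eq_zero _).2 hx]
      exact zero_mem _
    · exact Submodule.subset_span ⟨C, rfl⟩
  rw [eq_top_iff]
  intro y _
  obtain ⟨x, rfl⟩ := Submodule.mkQ_surjective _ y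
  exact hU (x := x) trivial
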